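/- arXiv:2008.01011 — 6 statements merged into one kernel-verified Lean document; each statement's English description precedes it below -/
import Mathlib

section
/- Let X be a real Banach space, S ⊆ X, and suppose s* := s*(S, X) < ∞. Let P be a Borel probability measure on S of growth order s*. Then: (a) for every s > s* and every codec C for S, the approximation class A^s(C) is a P*-null set, i.e., P*(A^s(C)) = 0; and (b) for every s with 0 ≤ s < s* there exist a codec C = (E_R, D_R)_{R∈ℕ} for S and a constant K > 0 such that δ(E_R, D_R) ≤ K·R^{−s} for all R ∈ ℕ; in particular A^s(C) = S and P(A^s(C)) = 1. -/
open MeasureTheory Metric Set ENNReal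

noncomputable section

variable {X : Type*}

/-- `CompressibleAt S s`: there is a codec `(E_R, D_R)_{R ∈ ℕ}` for `S` with
`sup_{R ∈ ℕ} R^s · δ(E_R, D_R) < ∞`. -/
def CompressibleAt [NormedAddCommGroup X] (S : Set X) (s : ℝ) : Prop :=
  ∃ (E : (R : ℕ) → S → (Fin R → Bool)) (D : (R : ℕ) → (Fin R → Bool) → X) (K : ℝ),
    ∀ R : ℕ, 0 < R → ∀ x : S, (R : ℝ) ^ s * ‖(x : X) - D R (E R x)‖ ≤ K

/-- The optimal compression rate `s*(S, X) ∈ [0,∞]`. -/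
def optRate [NormedAddCommGroup X] (S : Set X) : ℝ≥0∞ :=
  sSup (ENNReal.ofReal '' {s : ℝ | 0 ≤ s ∧ CompressibleAt S s})

/-- The approximation class `A^s(C)` of a codec `C = (E, D)`. -/
def approxClass [NormedAddCommGroup X] (S : Set X)
    (E : (R : ℕ) → S → (Fin R → Bool)) (D : (R : ℕ) → (Fin R → Bool) → X)
    (s : ℝ) : Set S :=
  {x : S | ∃ K : ℝ, ∀ R : ℕ, 0 < R → (R : ℝ) ^ s * ‖(x : X) - D R (E R x)‖ ≤ K}

/-- `P` has (logarithmic) growth order `s₀`. -/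
def HasGrowthOrder [NormedAddCommGroup X] [MeasurableSpace X] (S : Set X)
    (P : Measure S) (s₀ : ℝ) : Prop :=
  ∀ s : ℝ, s₀ < s → ∃ ε₀ c : ℝ, 0 < ε₀ ∧ 0 < c ∧
    ∀ (x : X) (ε : ℝ), 0 < ε → ε < ε₀ →
      P {y : S | (y : X) ∈ Metric.closedBall x ε} ≤
        ENNReal.ofReal ((2 : ℝ) ^ (-(c * ε ^ (-(1 : ℝ) / s))))

/-!
A decoder of code-length `R` takes at most `2 ^ R` values, so the points whose error at every
code-length `R` is at most `K * R ^ (-s)` lie in `2 ^ R` balls of that radius. If `s` exceeds the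
growth order, pick `t` strictly in between: for large `R` each of these balls has measure at
most `2 ^ (-b * R ^ (s / t))`, with `b > 0` fixed, and `2 ^ (R - b * R ^ (s / t)) → 0` because
`s / t > 1`. Letting `K` run through the positive integers exhausts the approximation
class by null sets.
-/

section AsymptoticEstimates

open Filter Topology

lemma tendsto_sub_const_mul_rpow_atBot {a b : ℝ} (ha : 1 < a) (hb : 0 < b) :
    Tendsto (fun x : ℝ => x - b * x ^ a) atTop atBot := by
  have hfactor : Tendsto (fun x : ℝ => 1 - b * x ^ (a - 1)) atTop atBot :=
    tendsto_atBot_add_const_left _ 1 <| tendsto_neg_atTop_atBot.comp <|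
      (tendsto_rpow_atTop (sub_pos.2 ha)).const_mul_atTop hb
  refine (tendsto_id.atTop_mul_atBot₀ hfactor).congr' ?_
  filter_upwards [eventually_gt_atTop 0] with x hx
  have hsplit : x ^ a = x * x ^ (a - 1) := by
    rw [← Real.rpow_one_add' hx.le (by linarith), add_sub_cancel]
  rw [hsplit, id]
  ring

lemma tendsto_ofReal_two_rpow_sub_const_mul_rpow {a b : ℝ} (ha : 1 < a) (hb : 0 < b) :
    Tendsto (fun R : ℕ => ENNReal.ofReal (2 ^ ((R : ℝ) - b * (R : ℝ) ^ a))) atTop (𝓝 0) := by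
  rw [← ENNReal.ofReal_zero]
  exact ENNReal.tendsto_ofReal <| (tendsto_rpow_atBot_of_base_gt_one 2 one_lt_two).comp <|
    (tendsto_sub_const_mul_rpow_atBot ha hb).comp tendsto_natCast_atTop_atTop

lemma tendsto_const_mul_natCast_rpow_neg {s : ℝ} (hs : 0 < s) (K : ℝ) :
    Tendsto (fun R : ℕ => K * (R : ℝ) ^ (-s)) atTop (𝓝 0) := by
  simpa using ((tendsto_rpow_neg_atTop hs).comp tendsto_natCast_atTop_atTop).const_mul K

lemma rpow_mul_le_iff_le_mul_rpow_neg {r s d K : ℝ} (hr : 0 < r) :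
    r ^ s * d ≤ K ↔ d ≤ K * r ^ (-s) := by
  rw [Real.rpow_neg hr.le, le_mul_inv_iff₀ (Real.rpow_pos_of_pos hr s), mul_comm]

lemma two_pow_mul_ofReal_two_rpow_neg (R : ℕ) (y : ℝ) :
    (2 : ℝ≥0∞) ^ R * ENNReal.ofReal (2 ^ (-y)) = ENNReal.ofReal (2 ^ ((R : ℝ) - y)) := by
  rw [sub_eq_add_neg, Real.rpow_add two_pos, Real.rpow_natCast, ENNReal.ofReal_mul (by positivity),
    ENNReal.ofReal_pow zero_le_two, ENNReal.ofReal_ofNat]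

end AsymptoticEstimates

lemma measure_le_card_mul_of_subset_iUnion {α ι : Type*} [MeasurableSpace α] [Fintype ι]
    {μ : Measure α} {A : Set α} {B : ι → Set α} {β : ℝ≥0∞} (hA : A ⊆ ⋃ i, B i)
    (hB : ∀ i, μ (B i) ≤ β) : μ A ≤ Fintype.card ι * β :=
  calc μ A ≤ ∑ i, μ (B i) := (measure_mono hA).trans (measure_iUnion_fintype_le μ B)
    _ ≤ ∑ _i : ι, β := Finset.sum_le_sum fun i _ => hB i
    _ = Fintype.card ι * β := by simp

/-- The level set of points of `S` that the codec `(E, D)` approximates at rate `s` with constant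
`K`; the approximation class is the union of these sets over all `K`. -/
def approxLevelSet [NormedAddCommGroup X] (S : Set X)
    (E : (R : ℕ) → S → (Fin R → Bool)) (D : (R : ℕ) → (Fin R → Bool) → X)
    (s K : ℝ) : Set S :=
  {x : S | ∀ R : ℕ, 0 < R → ‖(x : X) - D R (E R x)‖ ≤ K * (R : ℝ) ^ (-s)}

section Codec

variable [NormedAddCommGroup X] {S : Set X} {s K : ℝ}
  {E : (R : ℕ) → S → (Fin R → Bool)} {D : (R : ℕ) → (Fin R → Bool) → X}

lemma mem_approxLevelSet_iff {x : S} :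
    x ∈ approxLevelSet S E D s K ↔
      ∀ R : ℕ, 0 < R → (R : ℝ) ^ s * ‖(x : X) - D R (E R x)‖ ≤ K :=
  forall₂_congr fun _ hR => (rpow_mul_le_iff_le_mul_rpow_neg (Nat.cast_pos.2 hR)).symm

lemma approxLevelSet_mono {L : ℝ} (hKL : K ≤ L) :
    approxLevelSet S E D s K ⊆ approxLevelSet S E D s L :=
  fun _ hx R hR => (hx R hR).trans (by gcongr)

lemma approxClass_eq_iUnion_approxLevelSet :
    approxClass S E D s = ⋃ K : ℝ, approxLevelSet S E D s K := by
  ext x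
  simp only [mem_iUnion, mem_approxLevelSet_iff]
  rfl

lemma approxClass_subset_iUnion_nat_approxLevelSet :
    approxClass S E D s ⊆ ⋃ n : ℕ, approxLevelSet S E D s (n + 1) := by
  rw [approxClass_eq_iUnion_approxLevelSet]
  refine iUnion_subset fun K => ?_
  obtain ⟨n, hn⟩ := exists_nat_ge K
  exact (approxLevelSet_mono (hn.trans (le_add_of_nonneg_right zero_le_one))).trans
    (subset_iUnion (fun n : ℕ => approxLevelSet S E D s (n + 1)) n)

lemma approxLevelSet_subset_iUnion_closedBall {R : ℕ} (hR : 0 < R) :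
    approxLevelSet S E D s K ⊆
      ⋃ w : Fin R → Bool, {y : S | (y : X) ∈ closedBall (D R w) (K * (R : ℝ) ^ (-s))} :=
  fun x hx => mem_iUnion.2 ⟨E R x, mem_closedBall_iff_norm.2 (hx R hR)⟩

lemma CompressibleAt.mono {t : ℝ} (ht : CompressibleAt S t) (hst : s ≤ t) :
    CompressibleAt S s := by
  obtain ⟨E, D, K, h⟩ := ht
  refine ⟨E, D, K, fun R hR x => le_trans ?_ (h R hR x)⟩
  have hR_one : (1 : ℝ) ≤ R := Nat.one_le_cast.2 hR
  gcongr

lemma compressibleAt_of_lt_optRate (h : ENNReal.ofReal s < optRate S) : CompressibleAt S s := by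
  obtain ⟨_, ⟨t, ⟨_, ht⟩, rfl⟩, hst⟩ := lt_sSup_iff.1 h
  exact ht.mono (ENNReal.ofReal_lt_ofReal_iff'.1 hst).1.le

lemma CompressibleAt.exists_approxLevelSet_eq_univ (h : CompressibleAt S s) :
    ∃ (E : (R : ℕ) → S → (Fin R → Bool)) (D : (R : ℕ) → (Fin R → Bool) → X) (K : ℝ),
      0 < K ∧ approxLevelSet S E D s K = univ := by
  obtain ⟨E, D, K, hK⟩ := h
  exact ⟨E, D, max K 1, by positivity, eq_univ_of_forall fun x =>
    approxLevelSet_mono (le_max_left K 1) (mem_approxLevelSet_iff.2 fun R hR => hK R hR x)⟩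

end Codec

section GrowthOrder

open Filter

variable [NormedAddCommGroup X] [MeasurableSpace X] {S : Set X} {P : Measure S}

lemma measure_approxLevelSet_le {s K : ℝ}
    {E : (R : ℕ) → S → (Fin R → Bool)} {D : (R : ℕ) → (Fin R → Bool) → X}
    {R : ℕ} (hR : 0 < R) {β : ℝ≥0∞}
    (hβ : ∀ z : X, P {y : S | (y : X) ∈ closedBall z (K * (R : ℝ) ^ (-s))} ≤ β) :
    P (approxLevelSet S E D s K) ≤ 2 ^ R * β := by
  simpa using measure_le_card_mul_of_subset_iUnion
    (approxLevelSet_subset_iUnion_closedBall hR) fun w => hβ (D R w)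

namespace HasGrowthOrder

variable {s₀ s : ℝ}

lemma measure_approxLevelSet_eq_zero (hP : HasGrowthOrder S P s₀) (hs₀ : 0 ≤ s₀) (hs : s₀ < s)
    (E : (R : ℕ) → S → (Fin R → Bool)) (D : (R : ℕ) → (Fin R → Bool) → X) {K : ℝ} (hK : 0 < K) :
    P (approxLevelSet S E D s K) = 0 := by
  obtain ⟨t, hst, hts⟩ := exists_between hs
  have ht : 0 < t := hs₀.trans_lt hst
  obtain ⟨ε₀, c, hε₀, hc, hball⟩ := hP t hst
  have hlim := tendsto_ofReal_two_rpow_sub_const_mul_rpow ((one_lt_div ht).2 hts)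
    (show 0 < c * K ^ (-1 / t) by positivity)
  refine le_antisymm (ge_of_tendsto hlim ?_) zero_le
  filter_upwards [eventually_gt_atTop 0,
    (tendsto_const_mul_natCast_rpow_neg (ht.trans hts) K).eventually_lt_const hε₀] with R hR hRε
  have hexp : (K * (R : ℝ) ^ (-s)) ^ (-1 / t) = K ^ (-1 / t) * (R : ℝ) ^ (s / t) := by
    rw [Real.mul_rpow hK.le (by positivity), ← Real.rpow_mul R.cast_nonneg]
    ring_nf
  calc P (approxLevelSet S E D s K)
      ≤ 2 ^ R * ENNReal.ofReal (2 ^ (-(c * (K * (R : ℝ) ^ (-s)) ^ (-1 / t)))) :=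
        measure_approxLevelSet_le hR fun z => hball z _ (by positivity) hRε
    _ = ENNReal.ofReal (2 ^ ((R : ℝ) - c * K ^ (-1 / t) * (R : ℝ) ^ (s / t))) := by
        rw [two_pow_mul_ofReal_two_rpow_neg, hexp, mul_assoc]

lemma measure_approxClass_eq_zero (hP : HasGrowthOrder S P s₀) (hs₀ : 0 ≤ s₀) (hs : s₀ < s)
    (E : (R : ℕ) → S → (Fin R → Bool)) (D : (R : ℕ) → (Fin R → Bool) → X) :
    P (approxClass S E D s) = 0 :=
  measure_mono_null approxClass_subset_iUnion_nat_approxLevelSet <| measure_iUnion_null fun _ =>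
    hP.measure_approxLevelSet_eq_zero hs₀ hs E D (by positivity)

end HasGrowthOrder

end GrowthOrder

theorem statement0_general [NormedAddCommGroup X] [MeasurableSpace X]
    (S : Set X) {s₀ : ℝ} (hs₀ : 0 ≤ s₀)
    (P : Measure S) [IsProbabilityMeasure P] (hP : HasGrowthOrder S P s₀) :
    (∀ s : ℝ, s₀ < s →
      ∀ (E : (R : ℕ) → S → (Fin R → Bool)) (D : (R : ℕ) → (Fin R → Bool) → X),
        P (approxClass S E D s) = 0) ∧
    (∀ s : ℝ, ENNReal.ofReal s < optRate S →
      ∃ (E : (R : ℕ) → S → (Fin R → Bool)) (D : (R : ℕ) → (Fin R → Bool) → X) (K : ℝ),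
        0 < K ∧
        (∀ R : ℕ, 0 < R → ∀ x : S, ‖(x : X) - D R (E R x)‖ ≤ K * (R : ℝ) ^ (-s)) ∧
        approxClass S E D s = univ ∧ P (approxClass S E D s) = 1) := by
  refine ⟨fun s hs E D => hP.measure_approxClass_eq_zero hs₀ hs E D, fun s hs => ?_⟩
  obtain ⟨E, D, K, hK, hlevel⟩ := (compressibleAt_of_lt_optRate hs).exists_approxLevelSet_eq_univ
  have hclass : approxClass S E D s = univ := by
    rw [approxClass_eq_iUnion_approxLevelSet]
    exact iUnion_eq_univ_iff.2 fun x => ⟨K, hlevel ▸ mem_univ x⟩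
  exact ⟨E, D, K, hK, fun R hR x => eq_univ_iff_forall.1 hlevel x R hR, hclass,
    by rw [hclass, measure_univ]⟩

theorem statement0
    [NormedAddCommGroup X] [NormedSpace ℝ X] [CompleteSpace X]
    [MeasurableSpace X] [BorelSpace X]
    (S : Set X) (sStar : ℝ) (hsStar : 0 ≤ sStar)
    (hopt : optRate S = ENNReal.ofReal sStar)
    (P : Measure S) [IsProbabilityMeasure P]
    (hP : HasGrowthOrder S P sStar) :
    (∀ s : ℝ, sStar < s →
      ∀ (E : (R : ℕ) → S → (Fin R → Bool)) (D : (R : ℕ) → (Fin R → Bool) → X),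
        P (approxClass S E D s) = 0) ∧
    (∀ s : ℝ, 0 ≤ s → s < sStar →
      ∃ (E : (R : ℕ) → S → (Fin R → Bool)) (D : (R : ℕ) → (Fin R → Bool) → X) (K : ℝ),
        0 < K ∧
        (∀ R : ℕ, 0 < R → ∀ x : S, ‖(x : X) - D R (E R x)‖ ≤ K * (R : ℝ) ^ (-s)) ∧
        approxClass S E D s = Set.univ ∧ P (approxClass S E D s) = 1) := by
  refine (statement0_general S hsStar P hP).imp_right fun hrate s hs_nonneg hs => hrate s ?_
  exact hopt ▸ (ENNReal.ofReal_lt_ofReal_iff (hs_nonneg.trans_lt hs)).2 hs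
end
end

section
/- Let d ∈ ℕ, let 𝒫 = (I_m)_{m∈ℕ} be a d-regular partition of a countably infinite index set I, let p, q ∈ (0,∞] and α ∈ ℝ with α > d·(1/2 − 1/p)_+. Then the unit ball S := S_{𝒫,α}^{p,q} is a compact subset of ℓ²(I); its optimal compression rate with respect to ℓ²(I) equals s*(S, ℓ²(I)) = α/d − (1/2 − 1/p); and there exists a Borel probability measure P on S such that for every s > α/d − (1/2 − 1/p) there exist c, ε0 > 0 with P(S ∩ B̄(y, ε; ℓ²(I))) ≤ 2^{−c·ε^{−1/s}} for all y ∈ ℓ²(I) and all ε ∈ (0, ε0), where B̄(y, ε; ℓ²(I)) is the closed ℓ²-ball of radius ε around y. -/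
open MeasureTheory Metric Set ENNReal

noncomputable section

/-- `‖x|_F‖_{ℓ^p(F)} ∈ [0,∞]` for a finset `F ⊆ I`. -/
def finsetLpNorm {I : Type*} (p : ℝ≥0∞) (F : Finset I) (x : I → ℝ) : ℝ≥0∞ :=
  if p = ∞ then ⨆ i ∈ F, ENNReal.ofReal |x i|
  else (∑ i ∈ F, ENNReal.ofReal |x i| ^ p.toReal) ^ (1 / p.toReal)

/-- `‖u‖_{ℓ^q(ℕ)} ∈ [0,∞]` for a sequence `u : ℕ → [0,∞]`. -/
def seqLqNorm (q : ℝ≥0∞) (u : ℕ → ℝ≥0∞) : ℝ≥0∞ :=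
  if q = ∞ then ⨆ m, u m else (∑' m, u m ^ q.toReal) ^ (1 / q.toReal)

/-- The mixed norm `‖x‖_{Pt,α,θ}^{p,q} ∈ [0,∞]`; the blocks are indexed by
`m + 1`, `m : ℕ`, realizing the index set `ℕ = {1, 2, …}` of the paper. -/
def mixedNorm {I : Type*} (Pt : ℕ → Finset I) (p q : ℝ≥0∞) (α θ : ℝ) (x : I → ℝ) : ℝ≥0∞ :=
  seqLqNorm q fun m =>
    ENNReal.ofReal ((2 : ℝ) ^ (α * ((m + 1 : ℕ) : ℝ)) * ((m + 1 : ℕ) : ℝ) ^ θ) *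
      finsetLpNorm p (Pt (m + 1)) x

/-- `Pt` is a `d`-regular partition of `I` with constants `0 < a < A`:
the sets `(Pt m)_{m ≥ 1}` partition `I` and `a·2^(dm) ≤ |Pt m| ≤ A·2^(dm)` for `m ≥ 1`. -/
structure IsRegularPartition {I : Type*} (d : ℕ) (Pt : ℕ → Finset I) (a A : ℝ) : Prop where
  a_pos : 0 < a
  a_lt_A : a < A
  partition : ∀ i : I, ∃! m : ℕ, 0 < m ∧ i ∈ Pt m
  card_lower : ∀ m : ℕ, 0 < m → a * 2 ^ (d * m) ≤ ((Pt m).card : ℝ)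
  card_upper : ∀ m : ℕ, 0 < m → ((Pt m).card : ℝ) ≤ A * 2 ^ (d * m)

variable {X : Type*}

/-!
For the upper bound, the code with parameter `k` spends a number of bits that is `2 ^ (d k)` up to a
factor polynomial in `k`. It quantizes the coordinates of the first `κ k` blocks with a common step.
Only the coordinates exceeding the step are stored: if `p ≤ 2`, the bound on the `ℓ^p` norm leaves
few of them in each block beyond the `k`-th, so listing them with their positions fits the budget.
The `ℓ²` norms of the blocks decay geometrically, so for `κ` large the tail beyond the first `κ k`
blocks does not exceed the order of the quantization error; if `p > 2`, then `κ = 1` is enough.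
Compactness follows: a compressible set is totally bounded.

For the lower bound, equip each coordinate of the block `Pt (m + 1)` with an independent random sign
and an amplitude which is as large as the unit ball permits, up to a factor polynomial in `m`. If
`P` is the law of this vector and `ε` is a small multiple of the `ℓ²` norm of its restriction to the
block, a Chernoff bound shows that every ball of radius `ε` has measure at most
`2 ^ (-c 2 ^ (d m))`. The `2 ^ R` balls around the codewords of a code of length `R` have to cover
the unit ball, so `P` turns these estimates into a lower bound for `R`.
-/

open scoped lp

section BlockNorms

variable {I : Type*} {p q : ℝ≥0∞} {F : Finset I} {x : I → ℝ} {r t : ℝ}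

theorem le_seqLqNorm (hq : 0 < q) (u : ℕ → ℝ≥0∞) (m : ℕ) : u m ≤ seqLqNorm q u := by
  rcases eq_or_ne q ∞ with rfl | hq'
  · simpa only [seqLqNorm, if_true] using le_iSup u m
  · rw [seqLqNorm, if_neg hq', one_div, ENNReal.le_rpow_inv_iff (ENNReal.toReal_pos hq.ne' hq')]
    exact ENNReal.le_tsum m

theorem sum_rpow_le_of_finsetLpNorm_le (hp : 0 < p) (hp' : p ≠ ∞) (ht : 0 ≤ t)
    (h : finsetLpNorm p F x ≤ ENNReal.ofReal t) :
    ∑ i ∈ F, |x i| ^ p.toReal ≤ t ^ p.toReal := by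
  have hr : 0 < p.toReal := ENNReal.toReal_pos hp.ne' hp'
  rw [finsetLpNorm, if_neg hp', one_div, ENNReal.rpow_inv_le_iff hr,
    ENNReal.ofReal_rpow_of_nonneg ht hr.le] at h
  rw [← ENNReal.ofReal_le_ofReal_iff (by positivity),
    ENNReal.ofReal_sum_of_nonneg fun i _ ↦ by positivity]
  simpa only [ENNReal.ofReal_rpow_of_nonneg (abs_nonneg _) hr.le] using h

theorem ofReal_abs_le_finsetLpNorm (hp : 0 < p) {i : I} (hi : i ∈ F) :
    ENNReal.ofReal |x i| ≤ finsetLpNorm p F x := by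
  rcases eq_or_ne p ∞ with rfl | hp'
  · simpa only [finsetLpNorm, if_true] using
      le_iSup₂ (f := fun i (_ : i ∈ F) ↦ ENNReal.ofReal |x i|) i hi
  · rw [finsetLpNorm, if_neg hp', one_div,
      ENNReal.le_rpow_inv_iff (ENNReal.toReal_pos hp.ne' hp')]
    exact Finset.single_le_sum (f := fun i ↦ ENNReal.ofReal |x i| ^ p.toReal)
      (fun _ _ ↦ zero_le) hi

theorem abs_le_of_finsetLpNorm_le (hp : 0 < p) (ht : 0 ≤ t)
    (h : finsetLpNorm p F x ≤ ENNReal.ofReal t) {i : I} (hi : i ∈ F) : |x i| ≤ t :=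
  (ENNReal.ofReal_le_ofReal_iff ht).1 ((ofReal_abs_le_finsetLpNorm hp hi).trans h)

theorem finsetLpNorm_le_of_abs_le (hp : 0 < p) (h : ∀ i ∈ F, |x i| ≤ t) :
    finsetLpNorm p F x ≤ ENNReal.ofReal ((F.card : ℝ) ^ (1 / p.toReal) * t) := by
  have hle : ∀ i ∈ F, ENNReal.ofReal |x i| ≤ ENNReal.ofReal t := fun i hi ↦
    ENNReal.ofReal_le_ofReal (h i hi)
  rcases eq_or_ne p ∞ with rfl | hp'
  · simpa [finsetLpNorm] using hle
  have hr : 0 < p.toReal := ENNReal.toReal_pos hp.ne' hp'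
  rw [finsetLpNorm, if_neg hp', ENNReal.ofReal_mul (by positivity),
    ← ENNReal.ofReal_rpow_of_nonneg (by positivity) (by positivity), ENNReal.ofReal_natCast,
    one_div, ENNReal.rpow_inv_le_iff hr, ENNReal.mul_rpow_of_nonneg _ _ hr.le,
    ENNReal.rpow_inv_rpow hr.ne', ← nsmul_eq_mul]
  exact Finset.sum_le_card_nsmul _ _ _ fun i hi ↦
    ENNReal.rpow_le_rpow (hle i hi) hr.le

theorem sum_min_sq_le (hr : 0 < r) (hr2 : r ≤ 2) (ht : 0 ≤ t) :
    ∑ i ∈ F, min t |x i| ^ 2 ≤ t ^ (2 - r) * ∑ i ∈ F, |x i| ^ r := by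
  rw [Finset.mul_sum]
  refine Finset.sum_le_sum fun i _ ↦ ?_
  have hm : 0 ≤ min t |x i| := le_min ht (abs_nonneg _)
  calc min t |x i| ^ 2 = min t |x i| ^ (2 - r) * min t |x i| ^ r := by
        rw [← Real.rpow_add_of_nonneg hm (by linarith) hr.le, sub_add_cancel, Real.rpow_two]
    _ ≤ t ^ (2 - r) * |x i| ^ r := by
        gcongr
        · exact min_le_left _ _
        · exact min_le_right _ _

theorem sum_sq_le_card_rpow_mul_sq (hr : 2 ≤ r) (ht : 0 ≤ t) (h : ∑ i ∈ F, |x i| ^ r ≤ t ^ r) :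
    ∑ i ∈ F, x i ^ 2 ≤ (F.card : ℝ) ^ (2 * (1 / 2 - 1 / r)) * t ^ 2 := by
  have hpow (y : ℝ) (hy : 0 ≤ y) : (y ^ 2) ^ (r / 2) = y ^ r := by
    rw [← Real.rpow_two, ← Real.rpow_mul hy, mul_div_cancel₀ r two_ne_zero]
  have hpowerMean := Real.rpow_sum_le_const_mul_sum_rpow F (fun i ↦ |x i| ^ 2) (p := r / 2)
    (by linarith)
  simp only [abs_pow, abs_abs, hpow _ (abs_nonneg _)] at hpowerMean
  simp only [← sq_abs (x _)]
  rw [← Real.rpow_le_rpow_iff (z := r / 2) (by positivity) (by positivity) (by positivity),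
    Real.mul_rpow (by positivity) (by positivity), hpow t ht, ← Real.rpow_mul (by positivity)]
  have hexp : 2 * (1 / 2 - 1 / r) * (r / 2) = r / 2 - 1 := by field_simp
  rw [hexp]
  exact hpowerMean.trans (by gcongr)

theorem sum_sq_le_of_finsetLpNorm_le (hp : 0 < p) (ht : 0 ≤ t)
    (h : finsetLpNorm p F x ≤ ENNReal.ofReal t) :
    ∑ i ∈ F, x i ^ 2 ≤ (F.card : ℝ) ^ (2 * max (1 / 2 - 1 / p.toReal) 0) * t ^ 2 := by
  have habs : ∀ i ∈ F, |x i| ≤ t := fun i hi ↦ abs_le_of_finsetLpNorm_le hp ht h hi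
  rcases eq_or_ne p ∞ with rfl | hp'
  · simpa using Finset.sum_le_card_nsmul F _ _ fun i hi ↦ sq_le_sq.2
      ((habs i hi).trans (le_abs_self t))
  have hr : 0 < p.toReal := ENNReal.toReal_pos hp.ne' hp'
  have hsum := sum_rpow_le_of_finsetLpNorm_le hp hp' ht h
  rcases le_total 2 p.toReal with h2 | h2
  · rw [max_eq_left (sub_nonneg.2 (one_div_le_one_div_of_le two_pos h2))]
    exact sum_sq_le_card_rpow_mul_sq h2 ht hsum
  · rw [max_eq_right (sub_nonpos.2 (one_div_le_one_div_of_le hr h2)), mul_zero, Real.rpow_zero,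
      one_mul]
    calc ∑ i ∈ F, x i ^ 2 = ∑ i ∈ F, min t |x i| ^ 2 :=
          Finset.sum_congr rfl fun i hi ↦ by rw [min_eq_right (habs i hi), sq_abs]
      _ ≤ t ^ (2 - p.toReal) * t ^ p.toReal := (sum_min_sq_le hr h2 ht).trans (by gcongr)
      _ = t ^ 2 := by
        rw [← Real.rpow_add_of_nonneg ht (by linarith) hr.le, sub_add_cancel, Real.rpow_two]

theorem seqLqNorm_le_one {u w : ℕ → ℝ≥0∞} (hq : 0 < q) (hw : ∑' m, w m ≤ 1)
    (h : ∀ m, u m ≤ w m ^ (1 / q.toReal)) : seqLqNorm q u ≤ 1 := by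
  rcases eq_or_ne q ∞ with rfl | hq'
  · simpa [seqLqNorm] using h
  have hr : 0 < q.toReal := ENNReal.toReal_pos hq.ne' hq'
  rw [seqLqNorm, if_neg hq', one_div, ENNReal.rpow_inv_le_iff hr, ENNReal.one_rpow]
  refine le_trans (ENNReal.tsum_le_tsum fun m ↦ ?_) hw
  rw [← ENNReal.le_rpow_inv_iff hr, ← one_div]
  exact h m

theorem lowerSemicontinuous_finsetLpNorm (p : ℝ≥0∞) (F : Finset I) :
    LowerSemicontinuous fun x : I → ℝ ↦ finsetLpNorm p F x := by
  have hcoord (i : I) : Continuous fun x : I → ℝ ↦ ENNReal.ofReal |x i| :=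
    ENNReal.continuous_ofReal.comp (continuous_apply i).abs
  unfold finsetLpNorm
  split_ifs
  · exact lowerSemicontinuous_biSup fun i _ ↦ (hcoord i).lowerSemicontinuous
  · exact (ENNReal.continuous_rpow_const.comp (continuous_finsetSum _ fun i _ ↦
      ENNReal.continuous_rpow_const.comp (hcoord i))).lowerSemicontinuous

theorem lowerSemicontinuous_mixedNorm (Pt : ℕ → Finset I) (p q : ℝ≥0∞) (α θ : ℝ) :
    LowerSemicontinuous fun x : I → ℝ ↦ mixedNorm Pt p q α θ x := by
  have hblock (m : ℕ) : LowerSemicontinuous fun x : I → ℝ ↦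
      ENNReal.ofReal ((2 : ℝ) ^ (α * ((m + 1 : ℕ) : ℝ)) * ((m + 1 : ℕ) : ℝ) ^ θ) *
        finsetLpNorm p (Pt (m + 1)) x :=
    (ENNReal.continuous_const_mul ENNReal.ofReal_ne_top).comp_lowerSemicontinuous
      (lowerSemicontinuous_finsetLpNorm p _) fun _ _ hab ↦ by dsimp only; gcongr
  unfold mixedNorm seqLqNorm
  split_ifs
  · exact lowerSemicontinuous_iSup hblock
  · exact ENNReal.continuous_rpow_const.comp_lowerSemicontinuous
      (lowerSemicontinuous_tsum fun m ↦ ENNReal.continuous_rpow_const.comp_lowerSemicontinuous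
        (hblock m) (ENNReal.monotone_rpow_of_nonneg ENNReal.toReal_nonneg))
      (ENNReal.monotone_rpow_of_nonneg (by positivity))

theorem finsetLpNorm_le_of_mixedNorm_le_one {Pt : ℕ → Finset I} {α : ℝ} (hq : 0 < q)
    (h : mixedNorm Pt p q α 0 x ≤ 1) (m : ℕ) :
    finsetLpNorm p (Pt (m + 1)) x ≤ ENNReal.ofReal (2 ^ (-(α * ((m + 1 : ℕ) : ℝ)))) := by
  have hblock := (le_seqLqNorm hq _ m).trans h
  simp only [Real.rpow_zero, mul_one] at hblock
  rw [Real.rpow_neg zero_le_two, ENNReal.ofReal_inv_of_pos (by positivity),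
    ENNReal.le_inv_iff_mul_le, mul_comm]
  exact hblock

theorem mixedNorm_le_one {Pt : ℕ → Finset I} {α : ℝ} {c w : ℕ → ℝ} (hp : 0 < p) (hq : 0 < q)
    (hw0 : ∀ m, 0 ≤ w m) (hw : ∑' m, ENNReal.ofReal (w m) ≤ 1)
    (hcw : ∀ m, 2 ^ (α * ((m + 1 : ℕ) : ℝ)) * (((Pt (m + 1)).card : ℝ) ^ (1 / p.toReal) * c m) ≤
      w m ^ (1 / q.toReal))
    (hx : ∀ m, ∀ i ∈ Pt (m + 1), |x i| ≤ c m) : mixedNorm Pt p q α 0 x ≤ 1 := by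
  refine seqLqNorm_le_one hq hw fun m ↦ ?_
  simp only [Real.rpow_zero, mul_one]
  rw [ENNReal.ofReal_rpow_of_nonneg (hw0 m) (by positivity)]
  calc _ ≤ ENNReal.ofReal (2 ^ (α * ((m + 1 : ℕ) : ℝ))) *
        ENNReal.ofReal (((Pt (m + 1)).card : ℝ) ^ (1 / p.toReal) * c m) := by
        gcongr
        exact finsetLpNorm_le_of_abs_le hp (hx m)
    _ ≤ _ := by
        rw [← ENNReal.ofReal_mul (by positivity)]
        exact ENNReal.ofReal_le_ofReal (hcw m)

end BlockNorms

section LpTwo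

variable {I : Type*}

theorem sum_sq_le_norm_sq (f : ℓ²(I, ℝ)) (F : Finset I) : ∑ i ∈ F, f i ^ 2 ≤ ‖f‖ ^ 2 := by
  simpa using lp.sum_rpow_le_norm_rpow (p := 2) (by norm_num) f F

theorem norm_sq_le_of_forall_sum_sq_le {f : ℓ²(I, ℝ)} {C : ℝ} (h : ∀ F, ∑ i ∈ F, f i ^ 2 ≤ C) :
    ‖f‖ ^ 2 ≤ C := by
  have hC : 0 ≤ C := by simpa using h ∅
  refine Real.le_sqrt (norm_nonneg f) hC |>.1 ?_
  exact lp.norm_le_of_forall_sum_le (by norm_num) (Real.sqrt_nonneg _) fun F ↦ by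
    simpa [Real.sq_sqrt hC] using h F

theorem norm_sub_sq_le_of_forall_notMem_eq_zero {f g : ℓ²(I, ℝ)} {U : Finset I} {a b : ℝ}
    (hg : ∀ i ∉ U, g i = 0) (hU : ∑ i ∈ U, (f i - g i) ^ 2 ≤ a)
    (htail : ∀ F : Finset I, Disjoint F U → ∑ i ∈ F, f i ^ 2 ≤ b) : ‖f - g‖ ^ 2 ≤ a + b := by
  classical
  refine norm_sq_le_of_forall_sum_sq_le fun F ↦ ?_
  calc ∑ i ∈ F, (f - g) i ^ 2
      = ∑ i ∈ F ∩ U, (f i - g i) ^ 2 + ∑ i ∈ F \ U, (f i - g i) ^ 2 :=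
        (Finset.sum_inter_add_sum_sdiff F U _).symm
    _ ≤ ∑ i ∈ U, (f i - g i) ^ 2 + ∑ i ∈ F \ U, f i ^ 2 := by
        refine add_le_add (Finset.sum_le_sum_of_subset_of_nonneg Finset.inter_subset_right
          fun i _ _ ↦ sq_nonneg _) (Finset.sum_congr rfl fun i hi ↦ ?_).le
        rw [hg i (Finset.mem_sdiff.1 hi).2, sub_zero]
    _ ≤ a + b := add_le_add hU (htail _ Finset.sdiff_disjoint)

theorem continuous_of_forall_continuous_apply {T : Type*} [TopologicalSpace T] {K : Set ℓ²(I, ℝ)}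
    (hK : IsCompact K) {φ : T → ℓ²(I, ℝ)} (hφ : ∀ t, φ t ∈ K)
    (h : ∀ i, Continuous fun t ↦ φ t i) : Continuous φ := by
  have : CompactSpace K := isCompact_iff_compactSpace.1 hK
  have hcoe : Topology.IsClosedEmbedding fun f : K ↦ ((f : ℓ²(I, ℝ)) : I → ℝ) :=
    (lp.uniformContinuous_coe.continuous.comp continuous_subtype_val).isClosedEmbedding
      fun f g hfg ↦ Subtype.ext (lp.ext hfg)
  have hcodRestrict : Continuous fun t ↦ (⟨φ t, hφ t⟩ : K) :=
    hcoe.isInducing.continuous_iff.2 (continuous_pi h)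
  exact continuous_subtype_val.comp hcodRestrict

end LpTwo

section Partition

/-- The union of the first `M` blocks of a partition. -/
def initialBlocks {I : Type*} (Pt : ℕ → Finset I) (M : ℕ) : Finset I :=
  open Classical in (Finset.range M).biUnion fun m ↦ Pt (m + 1)

/-- The number `m` of the block `Pt (m + 1)` containing `i`. -/
def blockIndex {I : Type*} (Pt : ℕ → Finset I) (i : I) : ℕ := sInf {m | i ∈ Pt (m + 1)}

variable {I : Type*} {Pt : ℕ → Finset I} {d : ℕ} {a A : ℝ} {i : I} {m M : ℕ} {x : I → ℝ}

theorem mem_initialBlocks : i ∈ initialBlocks Pt M ↔ ∃ m < M, i ∈ Pt (m + 1) := by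
  simp [initialBlocks]

theorem IsRegularPartition.blockIndex_eq_iff (hreg : IsRegularPartition d Pt a A) :
    blockIndex Pt i = m ↔ i ∈ Pt (m + 1) := by
  obtain ⟨n, ⟨hn, hin⟩, huniq⟩ := hreg.partition i
  obtain ⟨n, rfl⟩ := Nat.exists_eq_succ_of_ne_zero hn.ne'
  have hset : {m | i ∈ Pt (m + 1)} = {n} := Set.eq_singleton_iff_unique_mem.2
    ⟨hin, fun m hm ↦ Nat.succ_injective (huniq (m + 1) ⟨m.succ_pos, hm⟩)⟩
  have hmem : i ∈ Pt (m + 1) ↔ m = n := by rw [← Set.mem_singleton_iff, ← hset, Set.mem_ofPred]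
  rw [blockIndex, hset, csInf_singleton, hmem, eq_comm]

theorem IsRegularPartition.pairwiseDisjoint (hreg : IsRegularPartition d Pt a A) (s : Set ℕ) :
    s.PairwiseDisjoint fun m ↦ Pt (m + 1) := fun _ _ _ _ hmn ↦
  Finset.disjoint_left.2 fun _ hi hj ↦
    hmn ((hreg.blockIndex_eq_iff.2 hi).symm.trans (hreg.blockIndex_eq_iff.2 hj))

theorem IsRegularPartition.card_pos (hreg : IsRegularPartition d Pt a A) (m : ℕ) :
    0 < (Pt (m + 1)).card := by
  have := hreg.a_pos
  exact_mod_cast (by positivity : 0 < a * 2 ^ (d * (m + 1))).trans_le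
    (hreg.card_lower (m + 1) m.succ_pos)

theorem IsRegularPartition.exists_card_le (hreg : IsRegularPartition d Pt a A) :
    ∃ N : ℕ, 0 < N ∧ ∀ m, (Pt (m + 1)).card ≤ N * 2 ^ (d * (m + 1)) := by
  obtain ⟨N, hN⟩ := exists_nat_ge A
  refine ⟨N, by exact_mod_cast (hreg.a_pos.trans hreg.a_lt_A).trans_le hN, fun m ↦ ?_⟩
  have := (hreg.card_upper (m + 1) m.succ_pos).trans (mul_le_mul_of_nonneg_right hN (by positivity))
  exact_mod_cast this

theorem IsRegularPartition.sum_sq_le_of_disjoint_initialBlocks (hreg : IsRegularPartition d Pt a A)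
    {C r : ℝ} (hC : 0 ≤ C) (hr : 0 ≤ r) (hr1 : r < 1)
    (h : ∀ m, ∑ i ∈ Pt (m + 1), x i ^ 2 ≤ C * r ^ m) {F : Finset I}
    (hF : Disjoint F (initialBlocks Pt M)) : ∑ i ∈ F, x i ^ 2 ≤ C / (1 - r) * r ^ M := by
  classical
  set L := F.sup (blockIndex Pt) + 1
  have hsub : F ⊆ (Finset.Ico M L).biUnion fun m ↦ Pt (m + 1) := fun i hi ↦ by
    have hmem : i ∈ Pt (blockIndex Pt i + 1) := hreg.blockIndex_eq_iff.1 rfl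
    refine Finset.mem_biUnion.2 ⟨blockIndex Pt i, Finset.mem_Ico.2 ⟨?_, ?_⟩, hmem⟩
    · by_contra! hlt
      exact Finset.disjoint_left.1 hF hi (mem_initialBlocks.2 ⟨_, hlt, hmem⟩)
    · exact Nat.lt_succ_of_le (Finset.le_sup hi)
  calc ∑ i ∈ F, x i ^ 2 ≤ ∑ i ∈ (Finset.Ico M L).biUnion fun m ↦ Pt (m + 1), x i ^ 2 :=
        Finset.sum_le_sum_of_subset_of_nonneg hsub fun i _ _ ↦ sq_nonneg _
    _ = ∑ m ∈ Finset.Ico M L, ∑ i ∈ Pt (m + 1), x i ^ 2 :=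
        Finset.sum_biUnion (hreg.pairwiseDisjoint _)
    _ ≤ ∑ m ∈ Finset.Ico M L, C * r ^ m := Finset.sum_le_sum fun m _ ↦ h m
    _ = C * ∑ m ∈ Finset.Ico M L, r ^ m := (Finset.mul_sum _ _ _).symm
    _ ≤ C * (r ^ M / (1 - r)) := by
        gcongr
        exact geom_sum_Ico_le_of_lt_one hr hr1
    _ = C / (1 - r) * r ^ M := by ring

end Partition

section UnitBall

variable {I : Type*}

/-- The unit ball `S_{𝒫,α}^{p,q}`, as a subset of `ℓ²(I)`. -/
def unitBall (Pt : ℕ → Finset I) (p q : ℝ≥0∞) (α : ℝ) : Set ℓ²(I, ℝ) :=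
  {f | mixedNorm Pt p q α 0 ⇑f ≤ 1}

/-- The number `α / d - (1 / 2 - 1 / p)`, which turns out to be the optimal compression rate of the
unit ball. -/
def compressionRate (d : ℕ) (p : ℝ≥0∞) (α : ℝ) : ℝ := α / d - (1 / 2 - 1 / p.toReal)

/-- The exponent `α - d (1 / 2 - 1 / p)₊`: an element of the unit ball has `ℓ²` norm
`O(2 ^ (-m γ))` on the `m`-th block, where `γ` is this exponent. -/
def blockDecay (d : ℕ) (p : ℝ≥0∞) (α : ℝ) : ℝ := α - d * max (1 / 2 - 1 / p.toReal) 0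

variable {Pt : ℕ → Finset I} {d : ℕ} {a A : ℝ} {p q : ℝ≥0∞} {α : ℝ} {x : I → ℝ}

theorem isClosed_unitBall (Pt : ℕ → Finset I) (p q : ℝ≥0∞) (α : ℝ) :
    IsClosed (unitBall Pt p q α) :=
  ((lowerSemicontinuous_mixedNorm Pt p q α 0).isClosed_preimage 1).preimage
    lp.uniformContinuous_coe.continuous

theorem pos_of_blockDecay_pos (hγ : 0 < blockDecay d p α) : 0 < α :=
  (mul_nonneg d.cast_nonneg (le_max_right _ _)).trans_lt (sub_pos.1 hγ)

theorem compressionRate_pos (hd : 0 < d) (hγ : 0 < blockDecay d p α) :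
    0 < compressionRate d p α := by
  have hd' : (0 : ℝ) < d := by exact_mod_cast hd
  rw [compressionRate, sub_pos, lt_div_iff₀' hd']
  exact (mul_le_mul_of_nonneg_left (le_max_left _ _) hd'.le).trans_lt (sub_pos.1 hγ)

theorem IsRegularPartition.exists_block_sum_sq_le (hreg : IsRegularPartition d Pt a A) (hp : 0 < p)
    (hq : 0 < q) (hγ : 0 < blockDecay d p α) :
    ∃ C : ℝ, 0 < C ∧ ∀ x, mixedNorm Pt p q α 0 x ≤ 1 → ∀ m,
      ∑ i ∈ Pt (m + 1), x i ^ 2 ≤ C * (2 ^ (-(2 * blockDecay d p α))) ^ m := by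
  obtain ⟨N, hN, hcard⟩ := hreg.exists_card_le
  set β := max (1 / 2 - 1 / p.toReal) 0 with hβ
  have hβ0 : 0 ≤ β := le_max_right _ _
  refine ⟨(N : ℝ) ^ (2 * β), by positivity, fun x hx m ↦ ?_⟩
  calc ∑ i ∈ Pt (m + 1), x i ^ 2
      ≤ ((Pt (m + 1)).card : ℝ) ^ (2 * β) * ((2 : ℝ) ^ (-(α * ((m + 1 : ℕ) : ℝ)))) ^ 2 :=
        sum_sq_le_of_finsetLpNorm_le hp (by positivity)
          (finsetLpNorm_le_of_mixedNorm_le_one hq hx m)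
    _ ≤ (N * 2 ^ (d * (m + 1))) ^ (2 * β) * ((2 : ℝ) ^ (-(α * ((m + 1 : ℕ) : ℝ)))) ^ 2 := by
        gcongr
        exact_mod_cast hcard m
    _ = (N : ℝ) ^ (2 * β) * (2 ^ (-(2 * blockDecay d p α))) ^ (m + 1) := by
        rw [Real.mul_rpow (by positivity) (by positivity), mul_assoc, blockDecay, ← hβ]
        simp only [← Real.rpow_natCast, ← Real.rpow_mul zero_le_two, ← Real.rpow_add zero_lt_two]
        push_cast
        ring_nf
    _ ≤ (N : ℝ) ^ (2 * β) * (2 ^ (-(2 * blockDecay d p α))) ^ m := by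
        gcongr _ * ?_
        exact pow_le_pow_of_le_one (by positivity)
          (Real.rpow_le_one_of_one_le_of_nonpos one_le_two (by linarith)) m.le_succ

theorem IsRegularPartition.exists_tail_sum_sq_le (hreg : IsRegularPartition d Pt a A) (hp : 0 < p)
    (hq : 0 < q) (hγ : 0 < blockDecay d p α) :
    ∃ C : ℝ, 0 < C ∧ ∀ x, mixedNorm Pt p q α 0 x ≤ 1 → ∀ M, ∀ F : Finset I,
      Disjoint F (initialBlocks Pt M) →
        ∑ i ∈ F, x i ^ 2 ≤ C * 2 ^ (-(2 * blockDecay d p α * M)) := by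
  obtain ⟨C, hC, hblock⟩ := hreg.exists_block_sum_sq_le hp hq hγ
  have hlt : (2 : ℝ) ^ (-(2 * blockDecay d p α)) < 1 :=
    Real.rpow_lt_one_of_one_lt_of_neg one_lt_two (by linarith)
  refine ⟨_, div_pos hC (sub_pos.2 hlt), fun x hx M F hF ↦ ?_⟩
  have hpow : (2 : ℝ) ^ (-(2 * blockDecay d p α * M)) = (2 ^ (-(2 * blockDecay d p α))) ^ M := by
    rw [← neg_mul, Real.rpow_mul_natCast zero_le_two]
  rw [hpow]
  exact hreg.sum_sq_le_of_disjoint_initialBlocks hC.le (by positivity) hlt (hblock x hx) hF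

theorem IsRegularPartition.memℓp_two (hreg : IsRegularPartition d Pt a A) (hp : 0 < p)
    (hq : 0 < q) (hγ : 0 < blockDecay d p α) (hx : mixedNorm Pt p q α 0 x ≤ 1) : Memℓp x 2 := by
  obtain ⟨C, -, hC⟩ := hreg.exists_tail_sum_sq_le hp hq hγ
  refine memℓp_gen' (C := C) fun F ↦ ?_
  simpa [initialBlocks] using hC x hx 0 F

end UnitBall

section Compression

variable [NormedAddCommGroup X] {S : Set X} {s s₀ : ℝ}

theorem exists_decoder_of_card_le (G : Finset X) {R : ℕ} (h : G.card ≤ 2 ^ R) :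
    ∃ D : (Fin R → Bool) → X, ∀ g ∈ G, ∃ c, D c = g := by
  obtain ⟨e⟩ := Function.Embedding.nonempty_of_card_le (α := G) (β := Fin R → Bool) (by simpa)
  exact ⟨Function.extend e Subtype.val 0, fun g hg ↦
    ⟨e ⟨g, hg⟩, e.injective.extend_apply _ _ _⟩⟩

theorem compressibleAt_of_codebooks {n : ℕ → ℕ} {δ : ℕ → ℝ} {K : ℝ} (hs : 0 ≤ s) (hn0 : n 0 = 0)
    (hn : Filter.Tendsto n Filter.atTop Filter.atTop)
    (hcover : ∀ k, ∃ G : Finset X, G.card ≤ 2 ^ n k ∧ ∀ f ∈ S, ∃ g ∈ G, ‖f - g‖ ≤ δ k)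
    (hK : ∀ k, (n (k + 1) : ℝ) ^ s * δ k ≤ K) : CompressibleAt S s := by
  classical
  have hscale (R : ℕ) : ∃ k, n k ≤ R ∧ R < n (k + 1) := by
    have hex : ∃ k, R < n k := (hn.eventually_gt_atTop R).exists
    obtain ⟨k, hk⟩ := Nat.exists_eq_succ_of_ne_zero (n := Nat.find hex) fun h0 ↦ by
      simpa [h0, hn0] using Nat.find_spec hex
    exact ⟨k, not_lt.1 (Nat.find_min hex (by omega)), (Nat.find_spec hex).trans_eq (congrArg n hk)⟩
  choose k hkR hRk using hscale
  choose G hGcard hG using hcover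
  choose D hD using fun R ↦ exists_decoder_of_card_le (G (k R)) (R := R)
    ((hGcard (k R)).trans (Nat.pow_le_pow_right two_pos (hkR R)))
  choose g hgG hfg using fun (R : ℕ) (f : S) ↦ hG (k R) f f.2
  choose E hE using fun (R : ℕ) (f : S) ↦ hD R (g R f) (hgG R f)
  refine ⟨E, D, K, fun R _ f ↦ ?_⟩
  rw [hE]
  calc (R : ℝ) ^ s * ‖(f : X) - g R f‖ ≤ (n (k R + 1) : ℝ) ^ s * δ (k R) := by
        gcongr
        · exact (hRk R).le
        · exact hfg R f
    _ ≤ K := hK (k R)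

theorem CompressibleAt.totallyBounded (h : CompressibleAt S s) (hs : 0 < s) :
    TotallyBounded S := by
  obtain ⟨E, D, K, hK⟩ := h
  refine Metric.totallyBounded_iff.2 fun ε hε ↦ ?_
  have htendsto : Filter.Tendsto (fun R : ℕ ↦ (R : ℝ) ^ s * ε) Filter.atTop Filter.atTop :=
    ((tendsto_rpow_atTop hs).comp tendsto_natCast_atTop_atTop).atTop_mul_const hε
  obtain ⟨R, hKR, hR⟩ :=
    ((htendsto.eventually_gt_atTop K).and (Filter.eventually_gt_atTop 0)).exists
  refine ⟨Set.range (D R), Set.finite_range _, fun x hx ↦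
    Set.mem_iUnion₂.2 ⟨_, ⟨E R ⟨x, hx⟩, rfl⟩, ?_⟩⟩
  rw [Metric.mem_ball, dist_eq_norm]
  exact lt_of_mul_lt_mul_left ((hK R hR ⟨x, hx⟩).trans_lt hKR) (by positivity)

theorem le_codeLength_of_measure_closedBall_le [MeasurableSpace X] (P : Measure S)
    [IsProbabilityMeasure P] {R : ℕ} (D : (Fin R → Bool) → X) {ε t : ℝ}
    (hD : ∀ x ∈ S, ∃ c, ‖x - D c‖ ≤ ε)
    (hP : ∀ y, P {x | (x : X) ∈ closedBall y ε} ≤ ENNReal.ofReal (2 ^ (-t))) : t ≤ R := by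
  have hcover : Set.univ ⊆ ⋃ c, {x : S | (x : X) ∈ closedBall (D c) ε} := fun x _ ↦ by
    obtain ⟨c, hc⟩ := hD x x.2
    exact Set.mem_iUnion.2 ⟨c, by rwa [Set.mem_ofPred_eq, mem_closedBall, dist_eq_norm]⟩
  have hone : 1 ≤ ENNReal.ofReal ((2 : ℝ) ^ (R : ℝ) * 2 ^ (-t)) := by
    calc (1 : ℝ≥0∞) = P Set.univ := measure_univ.symm
      _ ≤ ∑ c, P {x | (x : X) ∈ closedBall (D c) ε} :=
        (measure_mono hcover).trans (measure_iUnion_fintype_le _ _)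
      _ ≤ ∑ _c : Fin R → Bool, ENNReal.ofReal (2 ^ (-t)) := Finset.sum_le_sum fun c _ ↦ hP _
      _ = ENNReal.ofReal ((2 : ℝ) ^ (R : ℝ) * 2 ^ (-t)) := by
        rw [ENNReal.ofReal_mul (by positivity), Real.rpow_natCast,
          ENNReal.ofReal_pow zero_le_two]
        simp
  rw [ENNReal.one_le_ofReal, ← Real.rpow_add zero_lt_two] at hone
  by_contra! hlt
  exact hone.not_gt (Real.rpow_lt_one_of_one_lt_of_neg one_lt_two (by linarith))

theorem eventually_lt_mul_rpow {b t : ℝ} (hb : 0 < b) (ht : 1 < t) :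
    ∀ᶠ R : ℕ in Filter.atTop, (R : ℝ) < b * (R : ℝ) ^ t := by
  have htendsto : Filter.Tendsto (fun R : ℕ ↦ b * (R : ℝ) ^ (t - 1)) Filter.atTop Filter.atTop :=
    ((tendsto_rpow_atTop (sub_pos.2 ht)).comp tendsto_natCast_atTop_atTop).const_mul_atTop hb
  filter_upwards [htendsto.eventually_gt_atTop 1, Filter.eventually_gt_atTop 0] with R hR hR0
  have hR0' : (0 : ℝ) < R := by exact_mod_cast hR0
  calc (R : ℝ) = 1 * R := (one_mul _).symm
    _ < b * (R : ℝ) ^ (t - 1) * R := by gcongr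
    _ = b * (R : ℝ) ^ t := by rw [mul_assoc, ← Real.rpow_add_one hR0'.ne', sub_add_cancel]

theorem CompressibleAt.le_of_hasGrowthOrder [MeasurableSpace X] (h : CompressibleAt S s)
    {P : Measure S} [IsProbabilityMeasure P] (hs₀ : 0 ≤ s₀) (hP : HasGrowthOrder S P s₀) :
    s ≤ s₀ := by
  by_contra! hlt
  obtain ⟨s', hs₀s', hs's⟩ := exists_between hlt
  have hs' : 0 < s' := hs₀.trans_lt hs₀s'
  have hs : 0 < s := hs'.trans hs's
  obtain ⟨E, D, K, hK⟩ := h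
  obtain ⟨ε₀, c, hε₀, hc, hball⟩ := hP s' hs₀s'
  set L := max K 1
  have hL : 0 < L := by positivity
  have hsmall : ∀ᶠ R : ℕ in Filter.atTop, L / (R : ℝ) ^ s < ε₀ :=
    (((tendsto_rpow_atTop hs).comp tendsto_natCast_atTop_atTop).const_div_atTop
      L).eventually_lt_const hε₀
  have hlong := eventually_lt_mul_rpow (b := c * L ^ (-(1 : ℝ) / s')) (by positivity)
    ((one_lt_div hs').2 hs's)
  obtain ⟨R, hRε₀, hR, hR0⟩ := (hsmall.and (hlong.and (Filter.eventually_gt_atTop 0))).exists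
  have hRs : 0 < (R : ℝ) ^ s := by positivity
  refine hR.not_ge ?_
  have hexp : c * L ^ (-(1 : ℝ) / s') * (R : ℝ) ^ (s / s') =
      c * (L / (R : ℝ) ^ s) ^ (-(1 : ℝ) / s') := by
    rw [Real.div_rpow hL.le hRs.le, ← Real.rpow_mul R.cast_nonneg,
      div_eq_mul_inv (L ^ _), ← Real.rpow_neg R.cast_nonneg, mul_assoc]
    congr 3
    ring
  rw [hexp]
  refine le_codeLength_of_measure_closedBall_le P (D R) (fun x hx ↦ ⟨E R ⟨x, hx⟩, ?_⟩)
    fun y ↦ hball y _ (by positivity) hRε₀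
  rw [le_div_iff₀' hRs]
  exact (hK R hR0 ⟨x, hx⟩).trans (le_max_left _ _)

theorem optRate_eq_of_hasGrowthOrder [MeasurableSpace X] {P : Measure S} [IsProbabilityMeasure P]
    (hs₀ : 0 ≤ s₀) (hP : HasGrowthOrder S P s₀)
    (h : ∀ s, 0 ≤ s → s < s₀ → CompressibleAt S s) : optRate S = ENNReal.ofReal s₀ := by
  refine le_antisymm (sSup_le ?_) (le_of_forall_lt_imp_le_of_dense fun t ht ↦ ?_)
  · rintro _ ⟨s, ⟨-, hs⟩, rfl⟩
    exact ENNReal.ofReal_le_ofReal (hs.le_of_hasGrowthOrder hs₀ hP)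
  · have ht' : t ≠ ∞ := ht.ne_top
    rw [← ENNReal.ofReal_toReal ht'] at ht ⊢
    have hlt : t.toReal < s₀ :=
      (ENNReal.ofReal_lt_ofReal_iff_of_nonneg ENNReal.toReal_nonneg).1 ht
    exact le_sSup ⟨_, ⟨ENNReal.toReal_nonneg, h _ ENNReal.toReal_nonneg hlt⟩, rfl⟩

end Compression

section SparseQuantization

/-- The multiple of `2 h` nearest to `t`; numbers smaller than `h` in absolute value are
quantized to `0`. -/
def quantize (h t : ℝ) : ℝ := 2 * h * round (t / (2 * h))

variable {I : Type*} {h t : ℝ}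

theorem abs_sub_quantize_le (hh : 0 < h) (t : ℝ) : |t - quantize h t| ≤ min h |t| := by
  have hscale (z : ℤ) : |t - 2 * h * z| = 2 * h * |t / (2 * h) - z| := by
    rw [← abs_of_pos (by positivity : 0 < 2 * h), ← abs_mul, abs_of_pos (by positivity : 0 < 2 * h),
      mul_sub, mul_div_cancel₀ _ (by positivity)]
  refine le_min ?_ ?_
  · rw [quantize, hscale]
    have := abs_sub_round (t / (2 * h))
    nlinarith
  · calc |t - quantize h t| ≤ 2 * h * |t / (2 * h) - (0 : ℤ)| := by
          rw [quantize, hscale]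
          exact mul_le_mul_of_nonneg_left (round_le _ 0) (by positivity)
      _ = |t| := by rw [← hscale, Int.cast_zero, mul_zero, sub_zero]

theorem quantize_eq_zero (ht : |t| < h) : quantize h t = 0 := by
  have hh : 0 < h := (abs_nonneg t).trans_lt ht
  rw [abs_lt] at ht
  rw [quantize, round_eq_zero_iff.2 ⟨?_, ?_⟩, Int.cast_zero, mul_zero]
  · rw [le_div_iff₀ (by positivity)]
    linarith
  · rw [div_lt_iff₀ (by positivity)]
    linarith

theorem abs_round_le_two_mul_abs (y : ℝ) : |(round y : ℝ)| ≤ 2 * |y| := by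
  have hround : |y - round y| ≤ |y| := by simpa only [Int.cast_zero, sub_zero] using round_le y 0
  have := abs_sub_abs_le_abs_sub (round y : ℝ) y
  rw [abs_sub_comm] at this
  linarith

theorem card_filter_le_abs_mul_sq_le (U : Finset I) (x : I → ℝ) :
    ((U.filter fun i ↦ h ≤ |x i|).card : ℝ) * h ^ 2 ≤ ∑ i ∈ U, min h |x i| ^ 2 := by
  calc ((U.filter fun i ↦ h ≤ |x i|).card : ℝ) * h ^ 2
      = ∑ i ∈ U with h ≤ |x i|, min h |x i| ^ 2 := by
        rw [← nsmul_eq_mul, ← Finset.sum_const]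
        exact Finset.sum_congr rfl fun i hi ↦ by rw [min_eq_left (Finset.mem_filter.1 hi).2]
    _ ≤ ∑ i ∈ U, min h |x i| ^ 2 :=
      Finset.sum_le_sum_of_subset_of_nonneg (Finset.filter_subset _ _) fun _ _ _ ↦ sq_nonneg _

open scoped Pointwise in
theorem exists_finset_sums_card_le [AddCommMonoid X] (B : Finset X) (hB : 0 ∈ B) (K : ℕ) :
    ∃ G : Finset X, G.card ≤ B.card ^ K ∧
      ∀ (W : Finset I) (g : I → X), W.card ≤ K → (∀ i ∈ W, g i ∈ B) → ∑ i ∈ W, g i ∈ G := by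
  classical
  refine ⟨K • B, Finset.card_nsmul_le, fun W g hW hg ↦
    Finset.nsmul_subset_nsmul_right hB hW ?_⟩
  rw [← Finset.sum_const, ← Finset.mem_coe, Finset.coe_sum]
  exact Set.finsetSum_mem_finsetSum W _ g hg

theorem exists_codebook_sum_single_quantize [DecidableEq I] (U : Finset I) (hh : 0 < h) {B : ℕ}
    (hB : 1 / h ≤ B) (K : ℕ) : ∃ G : Finset ℓ²(I, ℝ), G.card ≤ (U.card * (2 * B + 1) + 1) ^ K ∧
      ∀ f : ℓ²(I, ℝ), (∀ i ∈ U, |f i| ≤ 1) → ∀ W ⊆ U, W.card ≤ K →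
        ∑ i ∈ W, lp.single 2 i (quantize h (f i)) ∈ G := by
  classical
  set atoms : Finset ℓ²(I, ℝ) :=
    (U ×ˢ Finset.Icc (-(B : ℤ)) B).image fun z ↦ lp.single 2 z.1 (2 * h * z.2)
  have hatoms : (insert 0 atoms).card ≤ U.card * (2 * B + 1) + 1 := by
    refine (Finset.card_insert_le _ _).trans (Nat.succ_le_succ (Finset.card_image_le.trans ?_))
    rw [Finset.card_product, Int.card_Icc]
    exact Nat.mul_le_mul_left _ (by omega)
  obtain ⟨G, hG, hsum⟩ := exists_finset_sums_card_le (I := I) (insert 0 atoms)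
    (Finset.mem_insert_self _ _) K
  refine ⟨G, hG.trans (Nat.pow_le_pow_left hatoms K), fun f hf W hWU hW ↦
    hsum W _ hW fun i hi ↦ Finset.mem_insert_of_mem (Finset.mem_image.2
      ⟨(i, round (f i / (2 * h))), Finset.mem_product.2 ⟨hWU hi, ?_⟩, rfl⟩)⟩
  have hround : |(round (f i / (2 * h)) : ℝ)| ≤ B :=
    calc |(round (f i / (2 * h)) : ℝ)| ≤ 2 * |f i / (2 * h)| := abs_round_le_two_mul_abs _
      _ = |f i| / h := by
        rw [abs_div, abs_of_pos (by positivity : 0 < 2 * h)]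
        field_simp
      _ ≤ 1 / h := by
        gcongr
        exact hf i (hWU hi)
      _ ≤ B := hB
  rw [Finset.mem_Icc, ← abs_le]
  exact_mod_cast hround

theorem exists_sparse_codebook (U : Finset I) (hh : 0 < h) {B : ℕ} (hB : 1 / h ≤ B) (K : ℕ) :
    ∃ G : Finset ℓ²(I, ℝ), G.card ≤ (U.card * (2 * B + 1) + 1) ^ K ∧
      ∀ f : ℓ²(I, ℝ), (∀ i ∈ U, |f i| ≤ 1) → ∑ i ∈ U, min h |f i| ^ 2 ≤ K * h ^ 2 →
        ∃ g ∈ G, (∀ i ∉ U, g i = 0) ∧ ∑ i ∈ U, (f i - g i) ^ 2 ≤ K * h ^ 2 := by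
  classical
  obtain ⟨G, hG, hmem⟩ := exists_codebook_sum_single_quantize U hh hB K
  refine ⟨G, hG, fun f hf hfK ↦ ?_⟩
  set W := U.filter fun i ↦ h ≤ |f i| with hW
  have hcard : W.card ≤ K := by
    have := (card_filter_le_abs_mul_sq_le U f).trans hfK
    exact_mod_cast le_of_mul_le_mul_right this (by positivity)
  set g : ℓ²(I, ℝ) := ∑ i ∈ W, lp.single 2 i (quantize h (f i)) with hg
  have hgapply (i : I) : g i = if i ∈ W then quantize h (f i) else 0 := by
    rw [hg, lp.coeFn_sum, Finset.sum_apply]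
    simp only [lp.single_apply, Pi.single_apply, Finset.sum_ite_eq]
  refine ⟨g, hmem f hf W (Finset.filter_subset _ _) hcard, fun i hi ↦ ?_,
    (Finset.sum_le_sum fun i hi ↦ ?_).trans hfK⟩
  · rw [hgapply, if_neg fun hiW ↦ hi (Finset.mem_filter.1 hiW).1]
  · have hgi : g i = quantize h (f i) := by
      rw [hgapply, ite_eq_left_iff]
      exact fun hiW ↦ (quantize_eq_zero (by simpa [hW, hi] using hiW)).symm
    rw [hgi, ← sq_abs]
    gcongr
    exact abs_sub_quantize_le hh _

end SparseQuantization

section UpperBound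

/-- The quantization step `2 ^ (-(d / p + α) k)` of the `k`-th codebook. -/
def quantStep (d : ℕ) (p : ℝ≥0∞) (α : ℝ) (k : ℕ) : ℝ := 2 ^ (-((d / p.toReal + α) * k))

variable {I : Type*} {Pt : ℕ → Finset I} {d N κ k m M : ℕ} {a A : ℝ} {p q : ℝ≥0∞} {α : ℝ}
  {x : I → ℝ}

theorem quantStep_pos : 0 < quantStep d p α k := Real.rpow_pos_of_pos two_pos _

theorem two_pow_mul_quantStep_sq (hd : 0 < d) :
    2 ^ (d * k) * quantStep d p α k ^ 2 = (2 : ℝ) ^ (-(2 * (d * compressionRate d p α * k))) := by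
  have hd' : (d : ℝ) ≠ 0 := by exact_mod_cast hd.ne'
  rw [quantStep, compressionRate, ← Real.rpow_mul_natCast zero_le_two, ← Real.rpow_natCast,
    ← Real.rpow_add zero_lt_two]
  congr 1
  push_cast
  field_simp
  ring

theorem abs_le_one_of_mixedNorm_le_one (hp : 0 < p) (hq : 0 < q) (hα : 0 ≤ α)
    (hx : mixedNorm Pt p q α 0 x ≤ 1) : ∀ i ∈ initialBlocks Pt M, |x i| ≤ 1 := fun i hi ↦ by
  obtain ⟨m, -, him⟩ := mem_initialBlocks.1 hi
  refine (abs_le_of_finsetLpNorm_le hp (by positivity)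
    (finsetLpNorm_le_of_mixedNorm_le_one hq hx m) him).trans ?_
  exact Real.rpow_le_one_of_one_le_of_nonpos one_le_two (neg_nonpos.2 (by positivity))

theorem sum_rpow_le_quantStep_rpow (hp : 0 < p) (hp' : p ≠ ∞) (hq : 0 < q) (hα : 0 ≤ α)
    (hx : mixedNorm Pt p q α 0 x ≤ 1) (hkm : k ≤ m + 1) :
    ∑ i ∈ Pt (m + 1), |x i| ^ p.toReal ≤ quantStep d p α k ^ p.toReal * 2 ^ (d * k) := by
  have hr : 0 < p.toReal := ENNReal.toReal_pos hp.ne' hp'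
  calc ∑ i ∈ Pt (m + 1), |x i| ^ p.toReal ≤ ((2 : ℝ) ^ (-(α * ((m + 1 : ℕ) : ℝ)))) ^ p.toReal :=
        sum_rpow_le_of_finsetLpNorm_le hp hp' (by positivity)
          (finsetLpNorm_le_of_mixedNorm_le_one hq hx m)
    _ ≤ ((2 : ℝ) ^ (-(α * k))) ^ p.toReal := by
        gcongr
        exact one_le_two
    _ = quantStep d p α k ^ p.toReal * 2 ^ (d * k) := by
        rw [quantStep, ← Real.rpow_mul zero_le_two, ← Real.rpow_mul zero_le_two,
          ← Real.rpow_natCast, ← Real.rpow_add zero_lt_two]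
        congr 1
        push_cast
        field_simp
        ring

theorem sum_block_min_quantStep_sq_le (hcard : ∀ m, (Pt (m + 1)).card ≤ N * 2 ^ (d * (m + 1)))
    (hN : 0 < N) (hp : 0 < p) (hq : 0 < q) (hα : 0 ≤ α) (hx : mixedNorm Pt p q α 0 x ≤ 1)
    (hm : m < k ∨ p ≠ ∞ ∧ p.toReal ≤ 2) :
    ∑ i ∈ Pt (m + 1), min (quantStep d p α k) |x i| ^ 2 ≤
      N * 2 ^ (d * k) * quantStep d p α k ^ 2 := by
  have hh : 0 < quantStep d p α k := quantStep_pos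
  set h := quantStep d p α k
  rcases lt_or_ge m k with hmk | hkm
  · have hcard' : (Pt (m + 1)).card ≤ N * 2 ^ (d * k) := (hcard m).trans (by
      gcongr
      · exact one_le_two
      · exact hmk)
    calc ∑ i ∈ Pt (m + 1), min h |x i| ^ 2 ≤ (Pt (m + 1)).card • h ^ 2 :=
          Finset.sum_le_card_nsmul _ _ _ fun i _ ↦
            pow_le_pow_left₀ (le_min hh.le (abs_nonneg _)) (min_le_left _ _) 2
      _ ≤ N * 2 ^ (d * k) * h ^ 2 := by
          rw [nsmul_eq_mul]
          gcongr
          exact_mod_cast hcard'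
  · obtain ⟨hp', hp2⟩ := hm.resolve_left hkm.not_gt
    calc ∑ i ∈ Pt (m + 1), min h |x i| ^ 2
        ≤ h ^ (2 - p.toReal) * ∑ i ∈ Pt (m + 1), |x i| ^ p.toReal :=
          sum_min_sq_le (ENNReal.toReal_pos hp.ne' hp') hp2 hh.le
      _ ≤ h ^ (2 - p.toReal) * (h ^ p.toReal * 2 ^ (d * k)) := by
          gcongr
          exact sum_rpow_le_quantStep_rpow hp hp' hq hα hx (by omega)
      _ = 1 * 2 ^ (d * k) * h ^ 2 := by
          rw [← mul_assoc, ← Real.rpow_add hh, sub_add_cancel, Real.rpow_two]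
          ring
      _ ≤ N * 2 ^ (d * k) * h ^ 2 := by
          gcongr
          exact_mod_cast hN

theorem exists_depth_factor (hd : 0 < d) (hγ : 0 < blockDecay d p α) :
    ∃ κ : ℕ, 0 < κ ∧ (κ = 1 ∨ p ≠ ∞ ∧ p.toReal ≤ 2) ∧
      d * compressionRate d p α ≤ blockDecay d p α * κ := by
  by_cases hp2 : p ≠ ∞ ∧ p.toReal ≤ 2
  · obtain ⟨κ, hκ⟩ := exists_nat_ge (max 1 (d * compressionRate d p α / blockDecay d p α))
    exact ⟨κ, by exact_mod_cast (le_max_left _ _).trans hκ, Or.inr hp2,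
      (div_le_iff₀' hγ).1 ((le_max_right _ _).trans hκ)⟩
  · have hle : 1 / p.toReal ≤ 1 / 2 := by
      by_cases hp' : p = ∞
      · simp [hp']
      · exact one_div_le_one_div_of_le two_pos (not_le.1 fun h ↦ hp2 ⟨hp', h⟩).le
    refine ⟨1, one_pos, Or.inl rfl, le_of_eq ?_⟩
    have hd' : (d : ℝ) ≠ 0 := by exact_mod_cast hd.ne'
    rw [blockDecay, max_eq_left (sub_nonneg.2 hle), compressionRate]
    field_simp
    push_cast
    ring

theorem card_initialBlocks_le (hcard : ∀ m, (Pt (m + 1)).card ≤ N * 2 ^ (d * (m + 1))) :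
    (initialBlocks Pt M).card ≤ M * (N * 2 ^ (d * M)) := by
  classical
  refine Finset.card_biUnion_le.trans ?_
  calc ∑ m ∈ Finset.range M, (Pt (m + 1)).card ≤ (Finset.range M).card • (N * 2 ^ (d * M)) :=
        Finset.sum_le_card_nsmul _ _ _ fun m hm ↦ (hcard m).trans (by
          gcongr
          · exact one_le_two
          · exact Finset.mem_range.1 hm)
    _ = M * (N * 2 ^ (d * M)) := by rw [Finset.card_range, smul_eq_mul]

theorem codebook_card_le {u e : ℕ} (hu : u ≤ κ * k * (N * 2 ^ (d * (κ * k)))) :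
    (u * (2 * 2 ^ (e * k) + 1) + 1) ^ (κ * k * N * 2 ^ (d * k)) ≤
      2 ^ ((κ + N + d * κ + e + 3) * κ * N * k ^ 2 * 2 ^ (d * k)) := by
  rcases Nat.eq_zero_or_pos k with rfl | hk
  · simp
  have hN : N ≤ 2 ^ (N * k) :=
    Nat.lt_two_pow_self.le.trans (Nat.pow_le_pow_right two_pos (Nat.le_mul_of_pos_right N hk))
  have hu' : u ≤ 2 ^ (κ * k) * (2 ^ (N * k) * 2 ^ (d * (κ * k))) := by
    refine hu.trans ?_
    gcongr
    exact Nat.lt_two_pow_self.le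
  have hquant : 2 * 2 ^ (e * k) + 1 ≤ 2 ^ (e * k + 2 * k) := by
    have := Nat.one_le_two_pow (n := e * k)
    calc 2 * 2 ^ (e * k) + 1 ≤ 2 ^ (e * k) * 2 ^ 2 := by omega
      _ ≤ 2 ^ (e * k) * 2 ^ (2 * k) := by gcongr <;> omega
      _ = 2 ^ (e * k + 2 * k) := (pow_add _ _ _).symm
  have hbase : u * (2 * 2 ^ (e * k) + 1) + 1 ≤ 2 ^ ((κ + N + d * κ + e + 3) * k) := by
    calc u * (2 * 2 ^ (e * k) + 1) + 1
        ≤ 2 ^ (κ * k) * (2 ^ (N * k) * 2 ^ (d * (κ * k))) * 2 ^ (e * k + 2 * k) + 1 := by gcongr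
      _ = 2 ^ ((κ + N + d * κ + e + 2) * k) + 1 := by
          simp only [← pow_add]
          congr 2
          ring
      _ ≤ 2 ^ ((κ + N + d * κ + e + 2) * k + 1) := by
          rw [pow_succ, mul_two]
          gcongr
          exact Nat.one_le_two_pow
      _ ≤ 2 ^ ((κ + N + d * κ + e + 3) * k) := Nat.pow_le_pow_right two_pos (by nlinarith)
  calc _ ≤ (2 ^ ((κ + N + d * κ + e + 3) * k)) ^ (κ * k * N * 2 ^ (d * k)) := by gcongr
    _ = _ := by
      rw [← pow_mul]
      congr 1
      ring

theorem IsRegularPartition.sum_min_quantStep_sq_le (hreg : IsRegularPartition d Pt a A)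
    (hcard : ∀ m, (Pt (m + 1)).card ≤ N * 2 ^ (d * (m + 1))) (hN : 0 < N) (hp : 0 < p)
    (hq : 0 < q) (hα : 0 ≤ α) (hκ : κ = 1 ∨ p ≠ ∞ ∧ p.toReal ≤ 2)
    (hx : mixedNorm Pt p q α 0 x ≤ 1) :
    ∑ i ∈ initialBlocks Pt (κ * k), min (quantStep d p α k) |x i| ^ 2 ≤
      (κ * k * N * 2 ^ (d * k) : ℕ) * quantStep d p α k ^ 2 := by
  classical
  calc _ = ∑ m ∈ Finset.range (κ * k), ∑ i ∈ Pt (m + 1), min (quantStep d p α k) |x i| ^ 2 :=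
        Finset.sum_biUnion (hreg.pairwiseDisjoint _)
    _ ≤ (Finset.range (κ * k)).card • (N * 2 ^ (d * k) * quantStep d p α k ^ 2) :=
        Finset.sum_le_card_nsmul _ _ _ fun m hm ↦
          sum_block_min_quantStep_sq_le hcard hN hp hq hα hx <|
            hκ.imp_left fun h ↦ by simpa [h] using hm
    _ = _ := by
        rw [Finset.card_range, nsmul_eq_mul]
        push_cast
        ring

theorem exists_one_div_quantStep_le (d : ℕ) (p : ℝ≥0∞) (α : ℝ) :
    ∃ e : ℕ, ∀ k, 1 / quantStep d p α k ≤ (2 ^ (e * k) : ℕ) := by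
  obtain ⟨e, he⟩ := exists_nat_ge (d / p.toReal + α)
  refine ⟨e, fun k ↦ ?_⟩
  rw [quantStep, Real.rpow_neg zero_le_two, one_div, inv_inv]
  push_cast
  rw [← Real.rpow_natCast]
  push_cast
  gcongr
  exact one_le_two

theorem IsRegularPartition.exists_codebook_initialBlocks (hreg : IsRegularPartition d Pt a A)
    (hcard : ∀ m, (Pt (m + 1)).card ≤ N * 2 ^ (d * (m + 1))) (hN : 0 < N) (hp : 0 < p)
    (hq : 0 < q) (hα : 0 ≤ α) (hκ : κ = 1 ∨ p ≠ ∞ ∧ p.toReal ≤ 2) {e : ℕ}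
    (he : 1 / quantStep d p α k ≤ (2 ^ (e * k) : ℕ)) :
    ∃ G : Finset ℓ²(I, ℝ), G.card ≤ 2 ^ ((κ + N + d * κ + e + 3) * κ * N * k ^ 2 * 2 ^ (d * k)) ∧
      ∀ f ∈ unitBall Pt p q α, ∃ g ∈ G, (∀ i ∉ initialBlocks Pt (κ * k), g i = 0) ∧
        ∑ i ∈ initialBlocks Pt (κ * k), (f i - g i) ^ 2 ≤
          (κ * k * N * 2 ^ (d * k) : ℕ) * quantStep d p α k ^ 2 := by
  obtain ⟨G, hG, happrox⟩ := exists_sparse_codebook (initialBlocks Pt (κ * k)) quantStep_pos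
    he (κ * k * N * 2 ^ (d * k))
  exact ⟨G, hG.trans (codebook_card_le (card_initialBlocks_le hcard)), fun f hf ↦
    happrox f (abs_le_one_of_mixedNorm_le_one hp hq hα hf)
      (hreg.sum_min_quantStep_sq_le hcard hN hp hq hα hκ hf)⟩

theorem IsRegularPartition.exists_codebooks (hreg : IsRegularPartition d Pt a A) (hd : 0 < d)
    (hp : 0 < p) (hq : 0 < q) (hγ : 0 < blockDecay d p α) :
    ∃ C₁ : ℕ, 0 < C₁ ∧ ∃ C₂ : ℝ, 0 < C₂ ∧ ∀ k, ∃ G : Finset ℓ²(I, ℝ),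
      G.card ≤ 2 ^ (C₁ * k ^ 2 * 2 ^ (d * k)) ∧ ∀ f ∈ unitBall Pt p q α, ∃ g ∈ G,
        ‖f - g‖ ^ 2 ≤ C₂ * (k + 1) * 2 ^ (-(2 * (d * compressionRate d p α * k))) := by
  obtain ⟨N, hN, hcard⟩ := hreg.exists_card_le
  obtain ⟨κ, hκ, hκp, hdepth⟩ := exists_depth_factor hd hγ
  obtain ⟨e, he⟩ := exists_one_div_quantStep_le d p α
  obtain ⟨C, hC, htail⟩ := hreg.exists_tail_sum_sq_le hp hq hγ
  refine ⟨(κ + N + d * κ + e + 3) * κ * N, by positivity, κ * N + C, by positivity, fun k ↦ ?_⟩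
  obtain ⟨G, hG, happrox⟩ := hreg.exists_codebook_initialBlocks hcard hN hp hq
    (pos_of_blockDecay_pos hγ).le hκp (he k)
  refine ⟨G, hG, fun f hf ↦ ?_⟩
  obtain ⟨g, hgG, hg, hfg⟩ := happrox f hf
  refine ⟨g, hgG, ?_⟩
  have hsq : _ = (2 : ℝ) ^ (-(2 * (d * compressionRate d p α * k))) := two_pow_mul_quantStep_sq hd
  have hexp : 2 * (d * compressionRate d p α * k) ≤ 2 * blockDecay d p α * (κ * k : ℕ) := by
    have := mul_le_mul_of_nonneg_right hdepth k.cast_nonneg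
    push_cast
    linarith
  generalize 2 * (d * compressionRate d p α * k) = E at hsq hexp ⊢
  calc ‖f - g‖ ^ 2 ≤ (κ * k * N * 2 ^ (d * k) : ℕ) * quantStep d p α k ^ 2 +
        C * 2 ^ (-(2 * blockDecay d p α * (κ * k : ℕ))) :=
        norm_sub_sq_le_of_forall_notMem_eq_zero hg hfg (htail f hf (κ * k))
    _ ≤ κ * k * N * 2 ^ (-E) + C * 2 ^ (-E) := by
        push_cast
        rw [mul_assoc _ (2 ^ (d * k)), hsq]
        push_cast at hexp
        gcongr
        exact one_le_two
    _ ≤ (κ * N + C) * (k + 1) * 2 ^ (-E) := by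
        rw [← add_mul]
        gcongr
        nlinarith [mul_nonneg hC.le (k.cast_nonneg (α := ℝ)),
          mul_nonneg (κ.cast_nonneg (α := ℝ)) (N.cast_nonneg (α := ℝ))]

theorem exists_pow_mul_pow_le {r : ℝ} (hr : 0 ≤ r) (hr1 : r < 1) (l : ℕ) :
    ∃ C : ℝ, ∀ n : ℕ, ((n : ℝ) + 1) ^ l * r ^ n ≤ C := by
  rcases hr.eq_or_lt with rfl | hr0
  · exact ⟨1, fun n ↦ by rcases n with _ | n <;> simp⟩
  obtain ⟨C, hC⟩ := (tendsto_pow_const_mul_const_pow_of_abs_lt_one l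
    (r := r) (by rwa [abs_of_nonneg hr])).bddAbove_range
  refine ⟨C / r, fun n ↦ ?_⟩
  rw [le_div_iff₀ hr0, mul_assoc, ← pow_succ]
  exact_mod_cast hC ⟨n + 1, rfl⟩

theorem exists_codeLength_rpow_mul_error_le {C₁ : ℕ} {C₂ s s₀ : ℝ} (hd : 0 < d) (hC₂ : 0 ≤ C₂)
    (hs₀ : s < s₀) : ∃ K : ℝ, ∀ k : ℕ,
      ((C₁ * (k + 1) ^ 2 * 2 ^ (d * (k + 1)) : ℕ) : ℝ) ^ s *
        √(C₂ * (k + 1) * 2 ^ (-(2 * (d * s₀ * k)))) ≤ K := by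
  obtain ⟨l, hl⟩ := exists_nat_ge (2 * s + 1 / 2)
  have hd' : (0 : ℝ) < d := by exact_mod_cast hd
  obtain ⟨K, hK⟩ := exists_pow_mul_pow_le (r := 2 ^ (-(d * (s₀ - s)))) (by positivity)
    (Real.rpow_lt_one_of_one_lt_of_neg one_lt_two
      (neg_neg_of_pos (mul_pos hd' (sub_pos.2 hs₀)))) l
  refine ⟨((C₁ * 2 ^ d : ℕ) : ℝ) ^ s * √C₂ * K, fun k ↦ ?_⟩
  calc _ = ((C₁ * 2 ^ d : ℕ) : ℝ) ^ s * √C₂ *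
        (((k : ℝ) + 1) ^ (2 * s + 1 / 2) * (2 ^ (-(d * (s₀ - s)))) ^ k) := by
        have hk : (0 : ℝ) < k + 1 := by positivity
        have hcode : ((C₁ * (k + 1) ^ 2 * 2 ^ (d * (k + 1)) : ℕ) : ℝ) =
            (C₁ * 2 ^ d : ℕ) * (k + 1 : ℝ) ^ (2 : ℝ) * 2 ^ ((d : ℝ) * k) := by
          rw [Real.rpow_two, ← Nat.cast_mul, Real.rpow_natCast]
          push_cast
          ring
        rw [hcode, Real.sqrt_mul (by positivity), Real.sqrt_mul hC₂, Real.sqrt_eq_rpow (_ + 1),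
          Real.sqrt_eq_rpow (2 ^ _), Real.mul_rpow (by positivity) (by positivity),
          Real.mul_rpow (by positivity) (by positivity), ← Real.rpow_mul hk.le,
          Real.rpow_add hk, ← Real.rpow_mul_natCast zero_le_two, ← Real.rpow_mul zero_le_two,
          ← Real.rpow_mul zero_le_two]
        have hexp : (2 : ℝ) ^ (-(d * (s₀ - s)) * k) =
            2 ^ (d * k * s) * 2 ^ (-(2 * (d * s₀ * k)) * (1 / 2)) := by
          rw [← Real.rpow_add zero_lt_two]
          ring_nf
        rw [hexp]
        ring
    _ ≤ ((C₁ * 2 ^ d : ℕ) : ℝ) ^ s * √C₂ * (((k : ℝ) + 1) ^ l * (2 ^ (-(d * (s₀ - s)))) ^ k) := by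
        rw [← Real.rpow_natCast _ l]
        gcongr
        linarith [k.cast_nonneg (α := ℝ)]
    _ ≤ _ := by
        gcongr
        exact hK k

theorem IsRegularPartition.compressibleAt_unitBall (hreg : IsRegularPartition d Pt a A)
    (hd : 0 < d) (hp : 0 < p) (hq : 0 < q) (hγ : 0 < blockDecay d p α) {s : ℝ} (hs : 0 ≤ s)
    (hs' : s < compressionRate d p α) : CompressibleAt (unitBall Pt p q α) s := by
  obtain ⟨C₁, hC₁, C₂, hC₂, hbooks⟩ := hreg.exists_codebooks (q := q) hd hp hq hγ
  obtain ⟨K, hK⟩ := exists_codeLength_rpow_mul_error_le (C₁ := C₁) hd hC₂.le hs'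
  refine compressibleAt_of_codebooks hs (n := fun k ↦ C₁ * k ^ 2 * 2 ^ (d * k)) (by simp)
    (Filter.tendsto_atTop_mono (fun k ↦ ?_) Filter.tendsto_id) (fun k ↦ ?_) hK
  · calc k ≤ k ^ 2 := Nat.le_self_pow two_ne_zero k
      _ = 1 * k ^ 2 * 1 := by ring
      _ ≤ C₁ * k ^ 2 * 2 ^ (d * k) := by
        gcongr
        · exact hC₁
        · exact Nat.one_le_two_pow
  · obtain ⟨G, hG, happrox⟩ := hbooks k
    refine ⟨G, hG, fun f hf ↦ ?_⟩
    obtain ⟨g, hgG, hfg⟩ := happrox f hf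
    exact ⟨g, hgG, Real.le_sqrt_of_sq_le hfg⟩

theorem IsRegularPartition.isCompact_unitBall (hreg : IsRegularPartition d Pt a A) (hd : 0 < d)
    (hp : 0 < p) (hq : 0 < q) (hγ : 0 < blockDecay d p α) : IsCompact (unitBall Pt p q α) := by
  obtain ⟨s, hs, hs'⟩ := exists_between (compressionRate_pos hd hγ)
  exact isCompact_iff_totallyBounded_isComplete.2
    ⟨(hreg.compressibleAt_unitBall hd hp hq hγ hs.le hs').totallyBounded hs,
      (isClosed_unitBall Pt p q α).isComplete⟩

end UpperBound

section RandomSigns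

/-- The sign `±1` encoded by a bit. -/
def boolSign (b : Bool) : ℝ := if b then 1 else -1

/-- The law of a family of independent fair coin flips indexed by `I`. -/
def fairCoins (I : Type*) : Measure (I → Bool) :=
  Measure.infinitePi fun _ ↦ (PMF.uniformOfFintype Bool).toMeasure

variable {I : Type*}

instance isProbabilityMeasure_fairCoins : IsProbabilityMeasure (fairCoins I) := by
  unfold fairCoins
  infer_instance

theorem integral_fairCoins_apply (f : Bool → ℝ) (i : I) :
    ∫ σ, f (σ i) ∂fairCoins I = (f true + f false) / 2 := by
  have hmap := (measurePreserving_eval_infinitePi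
    (fun _ : I ↦ (PMF.uniformOfFintype Bool).toMeasure) i).map_eq
  rw [fairCoins, ← integral_map (φ := Function.eval i)
    (measurable_pi_apply i).aemeasurable (measurable_of_finite f).aestronglyMeasurable, hmap,
    PMF.integral_eq_sum]
  simp only [Fintype.sum_bool, PMF.uniformOfFintype_apply, Fintype.card_bool, Nat.cast_ofNat,
    ENNReal.toReal_inv, ENNReal.toReal_ofNat, smul_eq_mul]
  ring

theorem mgf_sq_boolSign_sub_le (z : ℝ) (i : I) :
    ProbabilityTheory.mgf (fun σ : I → Bool ↦ (boolSign (σ i) - z) ^ 2) (fairCoins I)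
      (-Real.log 2) ≤ 3 / 4 := by
  have hlog := Real.log_pos one_lt_two
  have hle_one (w : ℝ) : Real.exp (-Real.log 2 * w ^ 2) ≤ 1 :=
    Real.exp_le_one_iff.2 (by nlinarith [sq_nonneg w])
  have hle_half {w : ℝ} (hw : 1 ≤ w ^ 2) : Real.exp (-Real.log 2 * w ^ 2) ≤ 1 / 2 := by
    rw [one_div, ← Real.exp_log two_pos, ← Real.exp_neg, Real.exp_log two_pos]
    exact Real.exp_le_exp.2 (by nlinarith)
  rw [ProbabilityTheory.mgf,
    integral_fairCoins_apply (fun b ↦ Real.exp (-Real.log 2 * (boolSign b - z) ^ 2))]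
  simp only [boolSign, Bool.false_eq_true, if_true, if_false]
  rcases le_total 0 z with hz | hz
  · linarith [hle_one (1 - z), hle_half (w := -1 - z) (by nlinarith)]
  · linarith [hle_one (-1 - z), hle_half (w := 1 - z) (by nlinarith)]

theorem iIndepFun_sq_boolSign_sub (z : I → ℝ) : ProbabilityTheory.iIndepFun
    (fun i (σ : I → Bool) ↦ (boolSign (σ i) - z i) ^ 2) (fairCoins I) :=
  ProbabilityTheory.iIndepFun_infinitePi (X := fun i b ↦ (boolSign b - z i) ^ 2)
    fun _ ↦ measurable_of_finite _

theorem measurable_sq_boolSign_sub (z : ℝ) (i : I) :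
    Measurable fun σ : I → Bool ↦ (boolSign (σ i) - z) ^ 2 :=
  (measurable_of_finite fun b ↦ (boolSign b - z) ^ 2).comp (measurable_pi_apply i)

theorem mgf_sum_sq_boolSign_sub_le (F : Finset I) (z : I → ℝ) :
    ProbabilityTheory.mgf (fun σ : I → Bool ↦ ∑ i ∈ F, (boolSign (σ i) - z i) ^ 2) (fairCoins I)
      (-Real.log 2) ≤ (3 / 4) ^ F.card := by
  have hmgf := (iIndepFun_sq_boolSign_sub z).mgf_sum (t := -Real.log 2)
    (fun i ↦ measurable_sq_boolSign_sub (z i) i) F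
  rw [Finset.sum_fn] at hmgf
  rw [hmgf, ← Finset.prod_const]
  exact Finset.prod_le_prod (fun i _ ↦ ProbabilityTheory.mgf_nonneg)
    fun i _ ↦ mgf_sq_boolSign_sub_le (z i) i

theorem two_rpow_mul_three_quarters_pow_le (n : ℕ) :
    (2 : ℝ) ^ ((n : ℝ) / 8) * (3 / 4) ^ n ≤ 2 ^ (-((n : ℝ) / 4)) := by
  have hbase : (3 / 4 : ℝ) ≤ 2 ^ (-(3 / 8) : ℝ) := by
    refine le_of_pow_le_pow_left₀ (n := 8) (by norm_num) (by positivity) ?_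
    rw [← Real.rpow_mul_natCast zero_le_two]
    norm_num
  calc (2 : ℝ) ^ ((n : ℝ) / 8) * (3 / 4) ^ n
      ≤ (2 : ℝ) ^ ((n : ℝ) / 8) * (2 ^ (-(3 / 8) : ℝ)) ^ n := by gcongr
    _ = 2 ^ (-((n : ℝ) / 4)) := by
        rw [← Real.rpow_mul_natCast zero_le_two, ← Real.rpow_add two_pos]
        ring_nf

theorem fairCoins_sum_sq_boolSign_sub_le (F : Finset I) (z : I → ℝ) :
    fairCoins I {σ | ∑ i ∈ F, (boolSign (σ i) - z i) ^ 2 ≤ F.card / 8} ≤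
      ENNReal.ofReal (2 ^ (-((F.card : ℝ) / 4))) := by
  have hlog := Real.log_pos one_lt_two
  have hint : Integrable (fun σ : I → Bool ↦
      Real.exp (-Real.log 2 * ∑ i ∈ F, (boolSign (σ i) - z i) ^ 2)) (fairCoins I) := by
    refine Integrable.of_bound (C := 1) ?_ (ae_of_all _ fun σ ↦ ?_)
    · exact ((Finset.measurable_fun_sum F fun i _ ↦ measurable_sq_boolSign_sub (z i) i).const_mul
        _).exp.aestronglyMeasurable
    · rw [Real.norm_of_nonneg (Real.exp_pos _).le, Real.exp_le_one_iff]
      exact mul_nonpos_of_nonpos_of_nonneg (neg_nonpos.2 hlog.le)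
        (Finset.sum_nonneg fun i _ ↦ sq_nonneg _)
  rw [← ofReal_measureReal]
  refine ENNReal.ofReal_le_ofReal ?_
  calc _ ≤ Real.exp (-(-Real.log 2) * (F.card / 8)) * ProbabilityTheory.mgf _ (fairCoins I) _ :=
        ProbabilityTheory.measure_le_le_exp_mul_mgf _ (neg_nonpos.2 hlog.le) hint
    _ ≤ 2 ^ ((F.card : ℝ) / 8) * (3 / 4) ^ F.card := by
        rw [neg_neg, ← Real.rpow_def_of_pos two_pos]
        gcongr
        exact mgf_sum_sq_boolSign_sub_le F z
    _ ≤ 2 ^ (-((F.card : ℝ) / 4)) := two_rpow_mul_three_quarters_pow_le F.card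

theorem fairCoins_sum_sq_mul_boolSign_sub_le (F : Finset I) (z : I → ℝ) {c r : ℝ} (hc : 0 < c)
    (hr : r ≤ c ^ 2 * F.card / 8) :
    fairCoins I {σ | ∑ i ∈ F, (c * boolSign (σ i) - z i) ^ 2 ≤ r} ≤
      ENNReal.ofReal (2 ^ (-((F.card : ℝ) / 4))) := by
  refine (measure_mono fun σ hσ ↦ ?_).trans (fairCoins_sum_sq_boolSign_sub_le F fun i ↦ z i / c)
  have hscale : ∑ i ∈ F, (c * boolSign (σ i) - z i) ^ 2 =
      c ^ 2 * ∑ i ∈ F, (boolSign (σ i) - z i / c) ^ 2 := by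
    rw [Finset.mul_sum]
    refine Finset.sum_congr rfl fun i _ ↦ ?_
    rw [← mul_pow, mul_sub, mul_div_cancel₀ _ hc.ne']
  rw [Set.mem_ofPred_eq, hscale] at hσ
  refine le_of_mul_le_mul_left (hσ.trans (hr.trans_eq ?_)) (by positivity : 0 < c ^ 2)
  ring

end RandomSigns

section Amplitudes

/-- The absolute value `2 ^ (-α (m + 1)) |I_{m+1}| ^ (-1/p) w_m ^ (1/q)` of the coordinates in
`Pt (m + 1)` of a random sign vector. The weights `w_m = 1 / ((m + 1) (m + 2))` sum to one, which
puts the sign vectors into the unit ball, and decay slower than any geometric sequence. -/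
def blockAmplitude {I : Type*} (Pt : ℕ → Finset I) (p q : ℝ≥0∞) (α : ℝ) (m : ℕ) : ℝ :=
  2 ^ (-(α * ((m + 1 : ℕ) : ℝ))) * ((Pt (m + 1)).card : ℝ) ^ (-(1 / p.toReal)) *
    (((m : ℝ) + 1) * (m + 2)) ^ (-(1 / q.toReal))

/-- The vector with signs `σ` and absolute values given by `blockAmplitude`. -/
def signVector {I : Type*} (Pt : ℕ → Finset I) (p q : ℝ≥0∞) (α : ℝ) (σ : I → Bool) (i : I) : ℝ :=
  blockAmplitude Pt p q α (blockIndex Pt i) * boolSign (σ i)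

variable {I : Type*} {Pt : ℕ → Finset I} {d : ℕ} {a A : ℝ} {p q : ℝ≥0∞} {α s : ℝ}

theorem tsum_ofReal_inv_mul_le_one :
    ∑' m : ℕ, ENNReal.ofReal (((m : ℝ) + 1) * (m + 2))⁻¹ ≤ 1 := by
  have hsum (n : ℕ) : ∑ m ∈ Finset.range n, (((m : ℝ) + 1) * (m + 2))⁻¹ = 1 - ((n : ℝ) + 1)⁻¹ := by
    induction n with
    | zero => simp
    | succ n ih =>
      rw [Finset.sum_range_succ, ih]
      push_cast
      field_simp
      ring
  refine ENNReal.tsum_le_of_sum_range_le fun n ↦ ?_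
  rw [← ENNReal.ofReal_sum_of_nonneg fun m _ ↦ by positivity, hsum, ENNReal.ofReal_le_one]
  exact sub_le_self 1 (by positivity)

theorem IsRegularPartition.blockAmplitude_pos (hreg : IsRegularPartition d Pt a A) (m : ℕ) :
    0 < blockAmplitude Pt p q α m := by
  have : (0 : ℝ) < (Pt (m + 1)).card := by exact_mod_cast hreg.card_pos m
  unfold blockAmplitude
  positivity

theorem IsRegularPartition.signVector_apply (hreg : IsRegularPartition d Pt a A) (σ : I → Bool)
    {m : ℕ} {i : I} (hi : i ∈ Pt (m + 1)) :
    signVector Pt p q α σ i = blockAmplitude Pt p q α m * boolSign (σ i) := by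
  rw [signVector, hreg.blockIndex_eq_iff.2 hi]

theorem continuous_signVector_apply (i : I) : Continuous fun σ ↦ signVector Pt p q α σ i :=
  continuous_const.mul
    ((continuous_of_discreteTopology (f := boolSign)).comp (continuous_apply i))

theorem IsRegularPartition.mixedNorm_signVector_le_one (hreg : IsRegularPartition d Pt a A)
    (hp : 0 < p) (hq : 0 < q) (σ : I → Bool) :
    mixedNorm Pt p q α 0 (signVector Pt p q α σ) ≤ 1 := by
  refine mixedNorm_le_one hp hq (c := blockAmplitude Pt p q α)
    (fun m ↦ by positivity) tsum_ofReal_inv_mul_le_one (fun m ↦ le_of_eq ?_) fun m i hi ↦ ?_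
  · have : (0 : ℝ) < (Pt (m + 1)).card := by exact_mod_cast hreg.card_pos m
    rw [blockAmplitude, Real.rpow_neg zero_le_two, Real.rpow_neg (Nat.cast_nonneg _),
      Real.rpow_neg (by positivity), Real.inv_rpow (by positivity)]
    field_simp
  · have habs : |boolSign (σ i)| = 1 := by cases σ i <;> simp [boolSign]
    rw [hreg.signVector_apply σ hi, abs_mul, habs, mul_one, abs_of_pos (hreg.blockAmplitude_pos m)]

theorem min_rpow_mul_rpow_le {a A n N : ℝ} (t : ℝ) (ha : 0 < a) (hA : 0 < A) (hN : 0 < N)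
    (hle : a * N ≤ n) (hge : n ≤ A * N) : min (a ^ t) (A ^ t) * N ^ t ≤ n ^ t := by
  have hn : 0 < n := (mul_pos ha hN).trans_le hle
  rcases le_total 0 t with ht | ht
  · calc min (a ^ t) (A ^ t) * N ^ t ≤ a ^ t * N ^ t := by gcongr; exact min_le_left _ _
      _ = (a * N) ^ t := (Real.mul_rpow ha.le hN.le).symm
      _ ≤ n ^ t := by gcongr
  · calc min (a ^ t) (A ^ t) * N ^ t ≤ A ^ t * N ^ t := by gcongr; exact min_le_right _ _
      _ = (A * N) ^ t := (Real.mul_rpow hA.le hN.le).symm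
      _ ≤ n ^ t := Real.rpow_le_rpow_of_nonpos hn hge ht

theorem exists_mul_pow_le_rpow_neg {r t : ℝ} (hr : 0 ≤ r) (hr1 : r < 1) (ht : 0 ≤ t) :
    ∃ C : ℝ, 0 < C ∧ ∀ m : ℕ, C * r ^ (m + 1) ≤ (((m : ℝ) + 1) * (m + 2)) ^ (-t) := by
  obtain ⟨l, hl⟩ := exists_nat_ge (2 * t)
  obtain ⟨C, hC⟩ := exists_pow_mul_pow_le hr hr1 l
  have hCpos : 0 < C := zero_lt_one.trans_le (by simpa using hC 0)
  refine ⟨C⁻¹, inv_pos.2 hCpos, fun m ↦ ?_⟩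
  have hweight : (((m : ℝ) + 1) * (m + 2)) ^ t ≤ ((m : ℝ) + 2) ^ l := by
    calc (((m : ℝ) + 1) * (m + 2)) ^ t ≤ (((m : ℝ) + 2) ^ (2 : ℝ)) ^ t := by
          gcongr
          rw [Real.rpow_two]
          nlinarith [m.cast_nonneg (α := ℝ)]
      _ = ((m : ℝ) + 2) ^ (2 * t) := (Real.rpow_mul (by positivity) _ _).symm
      _ ≤ ((m : ℝ) + 2) ^ l := by
          rw [← Real.rpow_natCast]
          exact Real.rpow_le_rpow_of_exponent_le (by linarith [m.cast_nonneg (α := ℝ)]) hl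
  rw [Real.rpow_neg (by positivity), inv_mul_le_iff₀ hCpos, ← div_eq_mul_inv,
    le_div_iff₀ (by positivity)]
  calc r ^ (m + 1) * (((m : ℝ) + 1) * (m + 2)) ^ t ≤ r ^ (m + 1) * ((m : ℝ) + 2) ^ l := by gcongr
    _ = (((m + 1 : ℕ) : ℝ) + 1) ^ l * r ^ (m + 1) := by push_cast; ring
    _ ≤ C := hC (m + 1)

theorem IsRegularPartition.blockAmplitude_sq_mul_card (hreg : IsRegularPartition d Pt a A)
    (m : ℕ) :
    blockAmplitude Pt p q α m ^ 2 * (Pt (m + 1)).card =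
      2 ^ (-(2 * α * ((m + 1 : ℕ) : ℝ))) * ((Pt (m + 1)).card : ℝ) ^ (1 - 2 / p.toReal) *
        (((m : ℝ) + 1) * (m + 2)) ^ (-(2 / q.toReal)) := by
  have hcard : (0 : ℝ) < (Pt (m + 1)).card := by exact_mod_cast hreg.card_pos m
  have hpow : ((Pt (m + 1)).card : ℝ) ^ (1 - 2 / p.toReal) =
      (((Pt (m + 1)).card : ℝ) ^ (-(1 / p.toReal))) ^ 2 * (Pt (m + 1)).card := by
    rw [← Real.rpow_mul_natCast hcard.le, ← Real.rpow_add_one hcard.ne']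
    push_cast
    ring_nf
  rw [hpow, blockAmplitude, mul_pow, mul_pow, ← Real.rpow_mul_natCast zero_le_two,
    ← Real.rpow_mul_natCast (x := ((m : ℝ) + 1) * (m + 2)) (by positivity)]
  push_cast
  ring_nf

theorem IsRegularPartition.exists_sq_le_blockAmplitude_sq_mul_card
    (hreg : IsRegularPartition d Pt a A) (hd : 0 < d) (hs : compressionRate d p α < s) :
    ∃ C : ℝ, 0 < C ∧ ∀ m : ℕ, (C * (((2 : ℝ) ^ d) ^ (m + 1)) ^ (-s)) ^ 2 ≤
      blockAmplitude Pt p q α m ^ 2 * (Pt (m + 1)).card / 8 := by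
  have : (0 : ℝ) < d := by exact_mod_cast hd
  have ha := hreg.a_pos
  have hA := ha.trans hreg.a_lt_A
  set s₀ := compressionRate d p α with hs₀
  set t := 1 - 2 / p.toReal with ht
  have hr1 : ((2 : ℝ) ^ d) ^ (-(2 * (s - s₀))) < 1 :=
    Real.rpow_lt_one_of_one_lt_of_neg (one_lt_pow₀ _root_.one_lt_two hd.ne') (by linarith)
  obtain ⟨K, hK, hweight⟩ := exists_mul_pow_le_rpow_neg (t := 2 / q.toReal) (by positivity) hr1
    (by positivity)
  set c := min (a ^ t) (A ^ t) with hc_def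
  have hc : 0 < c := lt_min (by positivity) (by positivity)
  refine ⟨√(c * K / 8), by positivity, fun m ↦ ?_⟩
  set B : ℝ := (2 ^ d) ^ (m + 1) with hB_def
  have hB : 0 < B := by positivity
  have hcard : c * B ^ t ≤ ((Pt (m + 1)).card : ℝ) ^ t := by
    rw [hB_def, ← pow_mul]
    exact min_rpow_mul_rpow_le t ha hA (by positivity) (hreg.card_lower _ m.succ_pos)
      (hreg.card_upper _ m.succ_pos)
  have hsplit : (B ^ (-s)) ^ 2 =
      2 ^ (-(2 * α * ((m + 1 : ℕ) : ℝ))) * B ^ t *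
        (((2 : ℝ) ^ d) ^ (-(2 * (s - s₀)))) ^ (m + 1) := by
    rw [hB_def]
    simp only [← Real.rpow_natCast, ← Real.rpow_mul zero_le_two, ← Real.rpow_add two_pos]
    congr 1
    rw [hs₀, compressionRate, ht]
    push_cast
    field_simp
    ring
  rw [hreg.blockAmplitude_sq_mul_card, mul_pow, Real.sq_sqrt (by positivity), hsplit]
  calc _ = 2 ^ (-(2 * α * ((m + 1 : ℕ) : ℝ))) * (c * B ^ t) *
        (K * (((2 : ℝ) ^ d) ^ (-(2 * (s - s₀)))) ^ (m + 1)) / 8 := by ring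
    _ ≤ _ := by gcongr; exact hweight m

end Amplitudes

section SmallBall

theorem exists_pow_scale {N C s ε : ℝ} (hN : 1 < N) (hC : 0 < C) (hs : 0 < s) (hε : 0 < ε)
    (hεN : ε < C * N ^ (-s)) :
    ∃ m : ℕ, ε ≤ C * (N ^ (m + 1)) ^ (-s) ∧ (C / ε) ^ (1 / s) ≤ N * N ^ (m + 1) := by
  have hN0 : 0 < N := zero_lt_one.trans hN
  have hscale {y : ℝ} (hy : 0 < y) : y ≤ (C / ε) ^ (1 / s) ↔ ε ≤ C * y ^ (-s) := by
    rw [one_div, Real.le_rpow_inv_iff_of_pos hy.le (by positivity) hs, le_div_iff₀ hε,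
      Real.rpow_neg hy.le, ← div_eq_mul_inv, le_div_iff₀' (by positivity)]
  have hNT : N ≤ (C / ε) ^ (1 / s) := (hscale hN0).2 hεN.le
  obtain ⟨n, hle, hlt⟩ := exists_nat_pow_near (hN.le.trans hNT) hN
  obtain ⟨m, rfl⟩ : ∃ m, n = m + 1 := Nat.exists_eq_succ_of_ne_zero <| by
    rintro rfl
    rw [zero_add, pow_one] at hlt
    exact hlt.not_ge hNT
  exact ⟨m, (hscale (by positivity)).1 hle, by rw [← pow_succ']; exact hlt.le⟩

theorem hasGrowthOrder_of_scales {X : Type*} [NormedAddCommGroup X] [MeasurableSpace X]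
    {S : Set X} {P : Measure S} {N b s₀ : ℝ} (hN : 1 < N) (hb : 0 < b) (hs₀ : 0 ≤ s₀)
    (h : ∀ s, s₀ < s → ∃ C : ℝ, 0 < C ∧ ∀ (m : ℕ) (y : X) (ε : ℝ), 0 < ε →
      ε ≤ C * (N ^ (m + 1)) ^ (-s) →
        P {x | (x : X) ∈ closedBall y ε} ≤ ENNReal.ofReal (2 ^ (-(b * N ^ (m + 1))))) :
    HasGrowthOrder S P s₀ := by
  intro s hs
  have hspos : 0 < s := hs₀.trans_lt hs
  have : 0 < N := zero_lt_one.trans hN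
  obtain ⟨C, hC, hball⟩ := h s hs
  refine ⟨C * N ^ (-s), b / N * C ^ (1 / s), by positivity, by positivity, fun y ε hε hεN ↦ ?_⟩
  obtain ⟨m, hradius, hscale⟩ := exists_pow_scale hN hC hspos hε hεN
  refine (hball m y ε hε hradius).trans (ENNReal.ofReal_le_ofReal
    (Real.rpow_le_rpow_of_exponent_le one_le_two (neg_le_neg ?_)))
  calc b / N * C ^ (1 / s) * ε ^ (-1 / s) = b / N * (C / ε) ^ (1 / s) := by
        rw [Real.div_rpow hC.le hε.le, neg_div, Real.rpow_neg hε.le]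
        ring
    _ ≤ b / N * (N * N ^ (m + 1)) := by gcongr
    _ = b * N ^ (m + 1) := by field_simp

variable {I : Type*} {Pt : ℕ → Finset I} {d : ℕ} {a A : ℝ} {p q : ℝ≥0∞} {α : ℝ}

theorem IsRegularPartition.fairCoins_signVector_mem_closedBall_le
    (hreg : IsRegularPartition d Pt a A) {Φ : (I → Bool) → ℓ²(I, ℝ)}
    (hΦ : ∀ σ, ⇑(Φ σ) = signVector Pt p q α σ) {m : ℕ} {ε : ℝ}
    (hεm : ε ^ 2 ≤ blockAmplitude Pt p q α m ^ 2 * (Pt (m + 1)).card / 8) (y : ℓ²(I, ℝ)) :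
    fairCoins I {σ | Φ σ ∈ closedBall y ε} ≤
      ENNReal.ofReal (2 ^ (-(a / 4 * (2 ^ d) ^ (m + 1)))) := by
  have hcard := hreg.card_lower (m + 1) m.succ_pos
  rw [pow_mul] at hcard
  refine (measure_mono fun σ hσ ↦ ?_).trans ((fairCoins_sum_sq_mul_boolSign_sub_le (Pt (m + 1)) y
    (hreg.blockAmplitude_pos m) hεm).trans (ENNReal.ofReal_le_ofReal
      (Real.rpow_le_rpow_of_exponent_le one_le_two (by linarith))))
  calc ∑ i ∈ Pt (m + 1), (blockAmplitude Pt p q α m * boolSign (σ i) - y i) ^ 2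
      = ∑ i ∈ Pt (m + 1), (Φ σ - y) i ^ 2 := Finset.sum_congr rfl fun i hi ↦ by
        rw [lp.coeFn_sub, Pi.sub_apply, hΦ, hreg.signVector_apply σ hi]
    _ ≤ ‖Φ σ - y‖ ^ 2 := sum_sq_le_norm_sq _ _
    _ ≤ ε ^ 2 := by
        gcongr
        rw [← dist_eq_norm]
        exact hσ

theorem IsRegularPartition.exists_hasGrowthOrder_unitBall [Countable I]
    [MeasurableSpace ℓ²(I, ℝ)] [BorelSpace ℓ²(I, ℝ)] (hreg : IsRegularPartition d Pt a A)
    (hd : 0 < d) (hp : 0 < p) (hq : 0 < q) (hγ : 0 < blockDecay d p α) :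
    ∃ P : Measure (unitBall Pt p q α), IsProbabilityMeasure P ∧
      HasGrowthOrder (unitBall Pt p q α) P (compressionRate d p α) := by
  have hball (σ) := hreg.mixedNorm_signVector_le_one (α := α) hp hq σ
  obtain ⟨Φ, hΦ_apply⟩ : ∃ Φ : (I → Bool) → ℓ²(I, ℝ), ∀ σ, ⇑(Φ σ) = signVector Pt p q α σ :=
    ⟨fun σ ↦ ⟨_, hreg.memℓp_two hp hq hγ (hball σ)⟩, fun _ ↦ rfl⟩
  have hΦ_mem (σ) : Φ σ ∈ unitBall Pt p q α :=
    (congrArg (mixedNorm Pt p q α 0) (hΦ_apply σ)).trans_le (hball σ)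
  have hΦ : Measurable Φ := (continuous_of_forall_continuous_apply
    (hreg.isCompact_unitBall hd hp hq hγ) hΦ_mem fun i ↦ by
      simpa only [hΦ_apply] using continuous_signVector_apply i).measurable
  have hΦS : Measurable fun σ ↦ (⟨Φ σ, hΦ_mem σ⟩ : unitBall Pt p q α) :=
    hΦ.subtype_mk
  refine ⟨(fairCoins I).map fun σ ↦ ⟨Φ σ, hΦ_mem σ⟩, Measure.isProbabilityMeasure_map
    hΦS.aemeasurable, hasGrowthOrder_of_scales (N := 2 ^ d) (b := a / 4)
      (one_lt_pow₀ _root_.one_lt_two hd.ne') (by linarith [hreg.a_pos])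
      (compressionRate_pos hd hγ).le fun s hs ↦ ?_⟩
  obtain ⟨C, hC, hamp⟩ := hreg.exists_sq_le_blockAmplitude_sq_mul_card (q := q) hd hs
  refine ⟨C, hC, fun m y ε hε hεm ↦ ?_⟩
  have hmeas : MeasurableSet {x : unitBall Pt p q α | (x : ℓ²(I, ℝ)) ∈ closedBall y ε} :=
    measurable_subtype_coe measurableSet_closedBall
  rw [Measure.map_apply hΦS hmeas]
  exact hreg.fairCoins_signVector_mem_closedBall_le hΦ_apply
    ((pow_le_pow_left₀ hε.le hεm 2).trans (hamp m)) y

end SmallBall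

theorem statement1 {I : Type*} [Countable I] [Infinite I]
    [MeasurableSpace (lp (fun _ : I => ℝ) 2)] [BorelSpace (lp (fun _ : I => ℝ) 2)]
    (d : ℕ) (hd : 0 < d) (Pt : ℕ → Finset I) (a A : ℝ)
    (hreg : IsRegularPartition d Pt a A)
    (p q : ℝ≥0∞) (hp : 0 < p) (hq : 0 < q) (α : ℝ)
    (hα : (d : ℝ) * max (1 / 2 - 1 / p.toReal) 0 < α) :
    (∀ x : I → ℝ, mixedNorm Pt p q α 0 x ≤ 1 → Memℓp x 2) ∧
    IsCompact {f : lp (fun _ : I => ℝ) 2 | mixedNorm Pt p q α 0 ⇑f ≤ 1} ∧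
    optRate {f : lp (fun _ : I => ℝ) 2 | mixedNorm Pt p q α 0 ⇑f ≤ 1} =
      ENNReal.ofReal (α / (d : ℝ) - (1 / 2 - 1 / p.toReal)) ∧
    ∃ P : Measure {f : lp (fun _ : I => ℝ) 2 | mixedNorm Pt p q α 0 ⇑f ≤ 1},
      IsProbabilityMeasure P ∧
      ∀ s : ℝ, α / (d : ℝ) - (1 / 2 - 1 / p.toReal) < s →
        ∃ c ε₀ : ℝ, 0 < c ∧ 0 < ε₀ ∧
          ∀ (y : lp (fun _ : I => ℝ) 2) (ε : ℝ), 0 < ε → ε < ε₀ →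
            P {x | (x : lp (fun _ : I => ℝ) 2) ∈ Metric.closedBall y ε} ≤
              ENNReal.ofReal ((2 : ℝ) ^ (-(c * ε ^ (-(1 : ℝ) / s)))) := by
  have hγ : 0 < blockDecay d p α := sub_pos.2 hα
  obtain ⟨P, hP, hgrowth⟩ := hreg.exists_hasGrowthOrder_unitBall (q := q) hd hp hq hγ
  have hrate : optRate (unitBall Pt p q α) = ENNReal.ofReal (compressionRate d p α) :=
    optRate_eq_of_hasGrowthOrder (compressionRate_pos hd hγ).le hgrowth
      fun s ↦ hreg.compressibleAt_unitBall hd hp hq hγ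
  refine ⟨fun x ↦ hreg.memℓp_two hp hq hγ, hreg.isCompact_unitBall hd hp hq hγ, hrate, P, hP,
    fun s hs ↦ ?_⟩
  obtain ⟨ε₀, c, hε₀, hc, hball⟩ := hgrowth s hs
  exact ⟨c, ε₀, hc, hε₀, hball⟩
end
end

section
/- Let X, Y, Z be real Banach spaces, S_X ⊆ X, S_Y ⊆ Y, S ⊆ Z, and suppose: (1) s*(S_X, X) = s*(S_Y, Y) =: s0 with s0 < ∞; (2) there is a Lipschitz continuous map Φ : S_X → Z (Lipschitz with respect to the X-norm on S_X and the Z-norm) with Φ(S_X) ⊇ S; (3) there is a Borel probability measure P on S_Y of growth order s0; (4) there is a measurable map Ψ : S_Y → S (with respect to the trace Borel σ-algebras) which is expansive, i.e., there is κ > 0 with ‖Ψ(x) − Ψ(x')‖_Z ≥ κ·‖x − x'‖_Y for all x, x' ∈ S_Y. Then s*(S, Z) = s0, and the pushforward measure P ∘ Ψ^{−1} is a Borel probability measure on S of growth order s0. -/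
open MeasureTheory Metric Set ENNReal

noncomputable section

variable {X : Type*}

/-!
Discarding the decoder, a codec only has to separate points: `S` is compressible at rate `s` iff
some `R`-bit encoders identify only points at distance `O(R^(-s))`. Such encoders pull back along
antilipschitz maps, so an antilipschitz map `A → B` gives `s*(B) ≤ s*(A)`. The lower bound for
`s*(S)` comes from a section of `Φ` and the upper bound from `Ψ`. Moreover, the preimage of an
`ε`-ball under an antilipschitz map lies in a ball of radius `O(ε)`, and rescaling the radius does
not affect the growth order.
-/

section Antilipschitz

variable {α β : Type*} [PseudoMetricSpace α] [PseudoMetricSpace β] {f : α → β}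

theorem antilipschitzWith_of_mul_dist_le {κ : ℝ} (hκ : 0 < κ)
    (hf : ∀ x y, κ * dist x y ≤ dist (f x) (f y)) : AntilipschitzWith κ⁻¹.toNNReal f :=
  .of_le_mul_dist fun x y => by
    rw [Real.coe_toNNReal _ (by positivity), le_inv_mul_iff₀ hκ]
    exact hf x y

theorem preimage_closedBall_subset_of_antilipschitzWith {C : NNReal}
    (hf : AntilipschitzWith C f) {a : α} {z : β} {r : ℝ} (ha : f a ∈ closedBall z r) :
    f ⁻¹' closedBall z r ⊆ closedBall a (C * (r + r)) := fun x hx =>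
  calc dist x a ≤ C * dist (f x) (f a) := hf.le_mul_dist x a
    _ ≤ C * (dist (f x) z + dist (f a) z) := by
        gcongr
        exact dist_triangle_right _ _ _
    _ ≤ C * (r + r) := by
        gcongr
        exacts [hx, ha]

end Antilipschitz

section Compression

variable [NormedAddCommGroup X] {Y : Type*} [NormedAddCommGroup Y] {A : Set X} {B : Set Y}

theorem compressibleAt_iff_exists_encoder {s : ℝ} :
    CompressibleAt A s ↔ ∃ (E : (R : ℕ) → A → (Fin R → Bool)) (K : ℝ),
      ∀ R : ℕ, 0 < R → ∀ x y : A, E R x = E R y → (R : ℝ) ^ s * dist x y ≤ K := by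
  constructor
  · rintro ⟨E, D, K, hK⟩
    refine ⟨E, K + K, fun R hR x y hxy => ?_⟩
    have dist_decode_le (z : A) : (R : ℝ) ^ s * dist (z : X) (D R (E R z)) ≤ K :=
      dist_eq_norm (z : X) (D R (E R z)) ▸ hK R hR z
    calc (R : ℝ) ^ s * dist x y
        ≤ (R : ℝ) ^ s * (dist (x : X) (D R (E R x)) + dist (y : X) (D R (E R x))) := by
          gcongr
          exact dist_triangle_right (x : X) (y : X) _
      _ = (R : ℝ) ^ s * dist (x : X) (D R (E R x)) + (R : ℝ) ^ s * dist (y : X) (D R (E R y)) := by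
          rw [mul_add, hxy]
      _ ≤ K + K := add_le_add (dist_decode_le x) (dist_decode_le y)
  · rintro ⟨E, K, hK⟩
    have exists_decoding (R : ℕ) (b : Fin R → Bool) :
        ∃ v : X, ∀ x : A, 0 < R → E R x = b → (R : ℝ) ^ s * ‖(x : X) - v‖ ≤ K := by
      by_cases hb : ∃ y, E R y = b
      · obtain ⟨y, rfl⟩ := hb
        refine ⟨y, fun x hR hxy => ?_⟩
        rw [← dist_eq_norm]
        exact hK R hR x y hxy
      · exact ⟨0, fun x _ hx => absurd ⟨x, hx⟩ hb⟩
    choose D hD using exists_decoding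
    exact ⟨E, D, K, fun R hR x => hD R _ x hR rfl⟩

theorem CompressibleAt.of_antilipschitzWith {s : ℝ} (hB : CompressibleAt B s) {g : A → B}
    {C : NNReal} (hg : AntilipschitzWith C g) : CompressibleAt A s := by
  obtain ⟨E, K, hK⟩ := compressibleAt_iff_exists_encoder.1 hB
  refine compressibleAt_iff_exists_encoder.2
    ⟨fun R => E R ∘ g, C * K, fun R hR x y hxy => ?_⟩
  calc (R : ℝ) ^ s * dist x y
      ≤ (R : ℝ) ^ s * (C * dist (g x) (g y)) := by
        gcongr
        exact hg.le_mul_dist x y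
    _ = C * ((R : ℝ) ^ s * dist (g x) (g y)) := by ring
    _ ≤ C * K := by
        gcongr
        exact hK R hR _ _ hxy

theorem optRate_le_of_antilipschitzWith {g : A → B} {C : NNReal} (hg : AntilipschitzWith C g) :
    optRate B ≤ optRate A :=
  sSup_le_sSup <| image_mono fun _ hs => ⟨hs.1, hs.2.of_antilipschitzWith hg⟩

theorem optRate_le_of_subset_range {f : A → Y} {L : NNReal} (hf : LipschitzWith L f)
    (hB : B ⊆ range f) : optRate A ≤ optRate B := by
  choose g hg using fun b : B => hB b.2
  refine optRate_le_of_antilipschitzWith (g := g) (C := L) <| .of_le_mul_dist fun b b' => ?_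
  simpa only [hg, Subtype.dist_eq b b'] using hf.dist_le_mul (g b) (g b')

end Compression

section GrowthOrder

variable [NormedAddCommGroup X] {Y : Type*} [NormedAddCommGroup Y]
  [MeasurableSpace X] [MeasurableSpace Y] {A : Set X} {B : Set Y} {P : Measure A} {s₀ : ℝ}

theorem HasGrowthOrder.of_measure_closedBall_le (hP : HasGrowthOrder A P s₀) {Q : Measure B}
    {C : ℝ} (hC : 0 < C)
    (hQ : ∀ (y : Y) (r : ℝ), 0 < r → ∃ x : X,
      Q {b : B | (b : Y) ∈ closedBall y r} ≤ P {a : A | (a : X) ∈ closedBall x (C * r)}) :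
    HasGrowthOrder B Q s₀ := by
  intro s hs
  obtain ⟨ε₀, c, hε₀, hc, hball⟩ := hP s hs
  refine ⟨ε₀ / C, c * C ^ (-(1 : ℝ) / s), by positivity, by positivity, fun y r hr hr_lt => ?_⟩
  obtain ⟨x, hx⟩ := hQ y r hr
  have hCr_lt : C * r < ε₀ := (lt_div_iff₀' hC).1 hr_lt
  rw [mul_assoc, ← Real.mul_rpow hC.le hr.le]
  exact hx.trans (hball x (C * r) (by positivity) hCr_lt)

theorem HasGrowthOrder.map_of_antilipschitzWith [OpensMeasurableSpace Y]
    (hP : HasGrowthOrder A P s₀) {g : A → B} (hgm : Measurable g) {C : NNReal}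
    (hg : AntilipschitzWith C g) : HasGrowthOrder B (P.map g) s₀ := by
  -- The factor `C * 2` would suffice, but it may vanish.
  refine hP.of_measure_closedBall_le (C := C * 2 + 1) (by positivity) fun y r hr => ?_
  have hball : MeasurableSet {b : B | (b : Y) ∈ closedBall y r} :=
    measurable_subtype_coe isClosed_closedBall.measurableSet
  rw [Measure.map_apply hgm hball]
  obtain hempty | ⟨a, ha⟩ := (g ⁻¹' {b : B | (b : Y) ∈ closedBall y r}).eq_empty_or_nonempty
  · exact ⟨0, by simp only [hempty, measure_empty, zero_le]⟩
  have hval : AntilipschitzWith C fun a => (g a : Y) := hg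
  have hradius : C * (r + r) ≤ (C * 2 + 1) * r := by linarith
  exact ⟨a, measure_mono <| (preimage_closedBall_subset_of_antilipschitzWith hval ha).trans <|
    closedBall_subset_closedBall hradius⟩

end GrowthOrder

theorem statement2_general {X Y Z : Type*}
    [NormedAddCommGroup X] [NormedAddCommGroup Y] [NormedAddCommGroup Z]
    [MeasurableSpace Y] [MeasurableSpace Z] [OpensMeasurableSpace Z]
    {SX : Set X} {SY : Set Y} {S : Set Z} {s₀ : NNReal}
    (hSX : optRate SX = s₀) (hSY : optRate SY = s₀)
    {Φ : SX → Z} {L : NNReal} (hΦ : LipschitzWith L Φ) (hrange : S ⊆ range Φ)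
    {P : Measure SY} [IsProbabilityMeasure P] (hP : HasGrowthOrder SY P s₀)
    {Ψ : SY → S} (hΨmeas : Measurable Ψ) {C : NNReal} (hΨ : AntilipschitzWith C Ψ) :
    optRate S = s₀ ∧ IsProbabilityMeasure (P.map Ψ) ∧ HasGrowthOrder S (P.map Ψ) s₀ :=
  ⟨le_antisymm (hSY ▸ optRate_le_of_antilipschitzWith hΨ)
      (hSX ▸ optRate_le_of_subset_range hΦ hrange),
    Measure.isProbabilityMeasure_map hΨmeas.aemeasurable,
    hP.map_of_antilipschitzWith hΨmeas hΨ⟩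

theorem statement2 {X Y Z : Type*}
    [NormedAddCommGroup X] [NormedSpace ℝ X] [CompleteSpace X]
    [NormedAddCommGroup Y] [NormedSpace ℝ Y] [CompleteSpace Y]
    [NormedAddCommGroup Z] [NormedSpace ℝ Z] [CompleteSpace Z]
    [MeasurableSpace Y] [BorelSpace Y] [MeasurableSpace Z] [BorelSpace Z]
    (SX : Set X) (SY : Set Y) (S : Set Z) (s₀ : ℝ) (hs₀ : 0 ≤ s₀)
    (hSX : optRate SX = ENNReal.ofReal s₀) (hSY : optRate SY = ENNReal.ofReal s₀)
    (Φ : SX → Z) (L : NNReal) (hΦ : LipschitzWith L Φ) (hrange : S ⊆ Set.range Φ)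
    (P : Measure SY) [IsProbabilityMeasure P] (hP : HasGrowthOrder SY P s₀)
    (Ψ : SY → S) (hΨmeas : Measurable Ψ) (κ : ℝ) (hκ : 0 < κ)
    (hexp : ∀ x x' : SY, κ * ‖(x : Y) - (x' : Y)‖ ≤ ‖(↑(Ψ x) : Z) - (↑(Ψ x') : Z)‖) :
    optRate S = ENNReal.ofReal s₀ ∧
    IsProbabilityMeasure (P.map Ψ) ∧ HasGrowthOrder S (P.map Ψ) s₀ := by
  lift s₀ to NNReal using hs₀
  rw [ofReal_coe_nnreal] at hSX hSY ⊢
  refine statement2_general hSX hSY hΦ hrange hP hΨmeas (antilipschitzWith_of_mul_dist_le hκ ?_)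
  simpa only [Subtype.dist_eq, dist_eq_norm] using hexp
end
end

section
/- Let X be a real Banach space, S ⊆ X, and let P be a Borel probability measure on S of growth order s0 ∈ [0,∞). Then for every s > s0 and every K > 0 there exists R0 ∈ ℕ (depending only on s, s0, K, P, S, X but not on the codec) such that for every R ∈ ℕ with R ≥ R0 and every encoding/decoding pair (E, D) of code-length R for S, the outer measure satisfies P*({x ∈ S : ‖x − D(E(x))‖ ≤ K·R^{−s}}) ≤ 2^{−R}. -/
open MeasureTheory Metric Set ENNReal

noncomputable section

variable {X : Type*}

open Asymptotics Filter Topology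

/-!
The points that a codec of length `R` reconstructs up to error `ε` lie in `2 ^ R` closed balls of
radius `ε`, one around each decoded codeword. For `s₀ < t < s`, growth order `s₀` bounds the measure
of a ball of radius `ε = K * R ^ (-s)` by `2 ^ (-δ * R ^ (s / t))`. Since `s / t > 1`, this beats
the factor `2 ^ R` by more than any prescribed exponential.
-/

theorem measure_dist_decode_encode_le {F α ι Y : Type*} [FunLike F (Set α) ℝ≥0∞]
    [OuterMeasureClass F α] [PseudoMetricSpace Y] [Fintype ι] (μ : F) (f : α → Y) (E : α → ι)
    (D : ι → Y) {ε : ℝ} {b : ℝ≥0∞} (hb : ∀ i, μ (f ⁻¹' closedBall (D i) ε) ≤ b) :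
    μ {a | dist (f a) (D (E a)) ≤ ε} ≤ Fintype.card ι * b :=
  calc μ {a | dist (f a) (D (E a)) ≤ ε}
      ≤ μ (⋃ i, f ⁻¹' closedBall (D i) ε) := measure_mono fun a ha => mem_iUnion.2 ⟨E a, ha⟩
    _ ≤ ∑ i, μ (f ⁻¹' closedBall (D i) ε) := measure_iUnion_fintype_le μ _
    _ ≤ Fintype.card ι * b := by
      simpa only [Finset.card_univ, nsmul_eq_mul] using
        Finset.sum_le_card_nsmul Finset.univ _ b fun i _ => hb i

theorem tendsto_const_mul_rpow_neg_nhdsGT_zero {s K : ℝ} (hs : 0 < s) (hK : 0 < K) :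
    Tendsto (fun x : ℝ => K * x ^ (-s)) atTop (𝓝[>] 0) := by
  refine tendsto_nhdsWithin_iff.2 ⟨?_, ?_⟩
  · simpa only [mul_zero] using (tendsto_rpow_neg_atTop hs).const_mul K
  · filter_upwards [eventually_gt_atTop 0] with x hx
    exact mul_pos hK (Real.rpow_pos_of_pos hx _)

theorem isLittleO_rpow_rpow_atTop_of_lt {p q : ℝ} (hpq : p < q) :
    (fun x : ℝ => x ^ p) =o[atTop] fun x => x ^ q := by
  have hpos : ∀ᶠ x : ℝ in atTop, 0 < x := eventually_gt_atTop 0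
  refine (isLittleO_iff_tendsto' ?_).2 ?_
  · filter_upwards [hpos] with x hx h
    exact absurd h (Real.rpow_pos_of_pos hx q).ne'
  · refine (tendsto_rpow_neg_atTop (sub_pos.2 hpq)).congr' ?_
    filter_upwards [hpos] with x hx
    rw [neg_sub, Real.rpow_sub hx]

theorem const_mul_rpow_neg_rpow_neg_one_div {s t K x : ℝ} (hK : 0 ≤ K) (hx : 0 ≤ x) :
    (K * x ^ (-s)) ^ (-1 / t) = K ^ (-1 / t) * x ^ (s / t) := by
  rw [Real.mul_rpow hK (Real.rpow_nonneg hx _), ← Real.rpow_mul hx, neg_mul_comm, ← neg_div,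
    neg_neg, mul_one_div]

theorem isLittleO_id_const_mul_rpow_neg_rpow_neg_one_div {s t K : ℝ} (ht : 0 < t) (hts : t < s)
    (hK : 0 < K) : (fun x : ℝ => x) =o[atTop] fun x => (K * x ^ (-s)) ^ (-1 / t) := by
  have hpow : (fun x : ℝ => x) =o[atTop] fun x => x ^ (s / t) := by
    simpa only [Real.rpow_one] using isLittleO_rpow_rpow_atTop_of_lt ((one_lt_div ht).2 hts)
  refine (hpow.const_mul_right (Real.rpow_pos_of_pos hK (-1 / t)).ne').congr' .rfl ?_
  filter_upwards [eventually_ge_atTop 0] with x hx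
  exact (const_mul_rpow_neg_rpow_neg_one_div hK.le hx).symm

theorem two_pow_mul_ofReal_two_rpow (n : ℕ) (y : ℝ) :
    (2 : ℝ≥0∞) ^ n * ENNReal.ofReal (2 ^ y) = ENNReal.ofReal (2 ^ (n + y)) := by
  rw [Real.rpow_add two_pos, Real.rpow_natCast, ENNReal.ofReal_mul (by positivity),
    ENNReal.ofReal_pow zero_le_two, ENNReal.ofReal_ofNat]

namespace HasGrowthOrder

variable [NormedAddCommGroup X] [MeasurableSpace X] {S : Set X} {P : Measure S} {s₀ s K : ℝ}

theorem eventually_measure_closedBall_le (hP : HasGrowthOrder S P s₀) (hs : s₀ < s) :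
    ∃ c > 0, ∀ᶠ ε in 𝓝[>] (0 : ℝ), ∀ x : X,
      P ((↑) ⁻¹' closedBall x ε) ≤ ENNReal.ofReal (2 ^ (-(c * ε ^ (-1 / s)))) := by
  obtain ⟨ε₀, c, hε₀, hc, hball⟩ := hP s hs
  refine ⟨c, hc, ?_⟩
  filter_upwards [Ioo_mem_nhdsGT hε₀] with ε hε x
  exact hball x ε hε.1 hε.2

theorem eventually_measure_closedBall_const_mul_rpow_neg_le (hP : HasGrowthOrder S P s₀)
    (hs₀ : 0 ≤ s₀) (hs : s₀ < s) (hK : 0 < K) (a : ℝ) :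
    ∀ᶠ r : ℝ in atTop, ∀ x : X,
      P ((↑) ⁻¹' closedBall x (K * r ^ (-s))) ≤ ENNReal.ofReal (2 ^ (-(a * r))) := by
  obtain ⟨t, hs₀t, hts⟩ := exists_between hs
  have ht : 0 < t := hs₀.trans_lt hs₀t
  obtain ⟨c, hc, hball⟩ := hP.eventually_measure_closedBall_le hs₀t
  have hexponent : ∀ᶠ r : ℝ in atTop, ‖a * r‖ ≤ ‖c * (K * r ^ (-s)) ^ (-1 / t)‖ :=
    (((isLittleO_id_const_mul_rpow_neg_rpow_neg_one_div ht hts hK).const_mul_left a).const_mul_right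
      hc.ne').eventuallyLE
  filter_upwards [(tendsto_const_mul_rpow_neg_nhdsGT_zero (ht.trans hts) hK).eventually hball,
    hexponent, eventually_ge_atTop 0] with r hr hle hr₀ x
  have hle' : a * r ≤ c * (K * r ^ (-s)) ^ (-1 / t) :=
    (Real.le_norm_self _).trans (hle.trans_eq (Real.norm_of_nonneg (by positivity)))
  exact (hr x).trans (ENNReal.ofReal_le_ofReal
    (Real.rpow_le_rpow_of_exponent_le one_le_two (neg_le_neg hle')))

end HasGrowthOrder

theorem statement4_general [NormedAddCommGroup X] [MeasurableSpace X] {S : Set X} {P : Measure S}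
    {s₀ s K : ℝ} (hs₀ : 0 ≤ s₀) (hP : HasGrowthOrder S P s₀) (hs : s₀ < s) (hK : 0 < K) (a : ℝ) :
    ∀ᶠ R : ℕ in atTop, ∀ (E : S → (Fin R → Bool)) (D : (Fin R → Bool) → X),
      P {x : S | ‖(x : X) - D (E x)‖ ≤ K * (R : ℝ) ^ (-s)} ≤
        ENNReal.ofReal ((2 : ℝ) ^ (-(a * R))) := by
  have hball := tendsto_natCast_atTop_atTop.eventually
    (hP.eventually_measure_closedBall_const_mul_rpow_neg_le hs₀ hs hK (1 + a))
  filter_upwards [hball] with R hR E D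
  calc P {x : S | ‖(x : X) - D (E x)‖ ≤ K * (R : ℝ) ^ (-s)}
      ≤ Fintype.card (Fin R → Bool) * ENNReal.ofReal (2 ^ (-((1 + a) * R))) := by
        simpa only [dist_eq_norm] using
          measure_dist_decode_encode_le P (fun x : S => (x : X)) E D fun w => hR (D w)
    _ = 2 ^ R * ENNReal.ofReal (2 ^ (-((1 + a) * R))) := by simp
    _ = ENNReal.ofReal (2 ^ (-(a * R))) := by
        rw [two_pow_mul_ofReal_two_rpow]
        congr 2
        ring

theorem statement4 {X : Type*} [NormedAddCommGroup X] [NormedSpace ℝ X] [CompleteSpace X]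
    [MeasurableSpace X] [BorelSpace X]
    (S : Set X) (P : Measure S) [IsProbabilityMeasure P]
    (s₀ : ℝ) (hs₀ : 0 ≤ s₀) (hP : HasGrowthOrder S P s₀)
    (s K : ℝ) (hs : s₀ < s) (hK : 0 < K) :
    ∃ R₀ : ℕ, ∀ R : ℕ, R₀ ≤ R →
      ∀ (E : S → (Fin R → Bool)) (D : (Fin R → Bool) → X),
        P {x : S | ‖(x : X) - D (E x)‖ ≤ K * (R : ℝ) ^ (-s)} ≤
          ENNReal.ofReal ((2 : ℝ) ^ (-(R : ℝ))) := by
  simpa only [one_mul] using eventually_atTop.1 (statement4_general hs₀ hP hs hK 1)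
end
end

section
/- Let X be a real Banach space, S ⊆ X, and let P be a Borel probability measure on S of growth order s0 ∈ [0,∞). Then for every s > s0 and every codec C = (E_R, D_R)_{R∈ℕ} for S, the approximation class A^s(C) = {x ∈ S : sup_{R∈ℕ} R^s·‖x − D_R(E_R(x))‖ < ∞} satisfies P*(A^s(C)) = 0. -/
open MeasureTheory Metric Set ENNReal

noncomputable section

variable {X : Type*}

/-!
A pair of code-length `R` decodes to at most `2 ^ R` points, so the elements of `S` it reproduces
up to an error `r` lie in `2 ^ R` balls of radius `r`. Fix `s₀ < t < s` and take
`r = K * R ^ (-s)`: growth order `s₀` bounds the measure of these elements by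
`2 ^ (R - a * R ^ (s / t))` for some `a > 0`. As `s / t > 1`, this is summable in `R`, and by
Borel–Cantelli almost every `x` has error larger than `K * R ^ (-s)` for all large `R`. Letting `K`
run through the positive integers, `R ^ s` times the error tends to infinity almost surely.
-/

open Filter Topology

lemma summable_rpow_sub_mul_rpow {b a p : ℝ} (hb : 1 < b) (ha : 0 < a) (hp : 1 < p) :
    Summable fun n : ℕ => b ^ ((n : ℝ) - a * (n : ℝ) ^ p) := by
  have hb₀ : 0 < b := one_pos.trans hb
  have hdominates : ∀ᶠ n : ℕ in atTop, 2 ≤ a * (n : ℝ) ^ (p - 1) :=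
    (((tendsto_rpow_atTop (sub_pos.2 hp)).comp tendsto_natCast_atTop_atTop).const_mul_atTop
      ha).eventually_ge_atTop 2
  refine (summable_geometric_of_lt_one (inv_nonneg.2 hb₀.le)
    (inv_lt_one_of_one_lt₀ hb)).of_norm_bounded_eventually_nat ?_
  filter_upwards [hdominates, eventually_gt_atTop 0] with n hn hpos
  have hn₀ : (0 : ℝ) < n := Nat.cast_pos.2 hpos
  have hexponent : (n : ℝ) - a * (n : ℝ) ^ p ≤ -n := by
    calc (n : ℝ) - a * (n : ℝ) ^ p = n * (1 - a * (n : ℝ) ^ (p - 1)) := by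
          rw [Real.rpow_sub_one hn₀.ne']
          field_simp
      _ ≤ n * (-1) := by gcongr; linarith
      _ = -n := mul_neg_one _
  calc ‖b ^ ((n : ℝ) - a * (n : ℝ) ^ p)‖ = b ^ ((n : ℝ) - a * (n : ℝ) ^ p) :=
        Real.norm_of_nonneg (by positivity)
    _ ≤ b ^ (-(n : ℝ)) := Real.rpow_le_rpow_of_exponent_le hb.le hexponent
    _ = b⁻¹ ^ n := by rw [Real.rpow_neg hb₀.le, Real.rpow_natCast, inv_pow]

lemma tsum_two_pow_mul_ofReal_two_rpow_ne_top {c K s t : ℝ} (hc : 0 < c) (hK : 0 < K)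
    (ht : 0 < t) (hts : t < s) :
    ∑' R : ℕ, 2 ^ R * ENNReal.ofReal (2 ^ (-(c * (K * (R : ℝ) ^ (-s)) ^ (-1 / t)))) ≠ ∞ := by
  have hscale (R : ℕ) :
      c * (K * (R : ℝ) ^ (-s)) ^ (-1 / t) = c * K ^ (-1 / t) * (R : ℝ) ^ (s / t) := by
    rw [Real.mul_rpow hK.le (by positivity), ← Real.rpow_mul R.cast_nonneg, mul_assoc]
    congr 3
    ring
  have hterm (R : ℕ) :
      2 ^ R * ENNReal.ofReal (2 ^ (-(c * (K * (R : ℝ) ^ (-s)) ^ (-1 / t)))) =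
        ENNReal.ofReal (2 ^ ((R : ℝ) - c * K ^ (-1 / t) * (R : ℝ) ^ (s / t))) := by
    rw [hscale, sub_eq_add_neg, Real.rpow_add two_pos, Real.rpow_natCast,
      ENNReal.ofReal_mul (by positivity), ENNReal.ofReal_pow two_pos.le, ENNReal.ofReal_ofNat]
  simp_rw [hterm]
  exact (summable_rpow_sub_mul_rpow one_lt_two (by positivity)
    ((one_lt_div ht).2 hts)).tsum_ofReal_ne_top

section Decoding

variable {α : Type*} [MeasurableSpace α] {μ : Measure α}

lemma ae_eventually_notMem_of_eventually_measure_le {A : ℕ → Set α} {u : ℕ → ℝ≥0∞}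
    (hA : ∀ᶠ n in atTop, μ (A n) ≤ u n) (hu : ∑' n, u n ≠ ∞) :
    ∀ᵐ x ∂μ, ∀ᶠ n in atTop, x ∉ A n := by
  obtain ⟨N, hN⟩ := eventually_atTop.1 hA
  have htail : ∑' n, μ (A (n + N)) ≠ ∞ :=
    ne_top_of_le_ne_top hu <| calc
      ∑' n, μ (A (n + N)) ≤ ∑' n, u (n + N) := ENNReal.tsum_le_tsum fun n => hN _ (by lia)
      _ ≤ ∑' n, u n := ENNReal.tsum_comp_le_tsum_of_injective (add_left_injective N) u
  filter_upwards [ae_eventually_notMem htail] with x hx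
  rwa [← map_add_atTop_eq_nat N, eventually_map]

variable [PseudoMetricSpace X] {f : α → X}

lemma measure_setOf_dist_decode_le {ι : Type*} [Fintype ι] (E : α → ι) (D : ι → X) {r : ℝ}
    {b : ℝ≥0∞} (hb : ∀ x, μ (f ⁻¹' closedBall x r) ≤ b) :
    μ {a | dist (f a) (D (E a)) ≤ r} ≤ Fintype.card ι * b := by
  have hcover : {a | dist (f a) (D (E a)) ≤ r} ⊆ ⋃ i, f ⁻¹' closedBall (D i) r :=
    fun a ha => mem_iUnion.2 ⟨E a, ha⟩
  calc μ {a | dist (f a) (D (E a)) ≤ r} ≤ ∑ i, μ (f ⁻¹' closedBall (D i) r) :=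
        (measure_mono hcover).trans (measure_iUnion_fintype_le _ _)
    _ ≤ ∑ _i : ι, b := Finset.sum_le_sum fun i _ => hb (D i)
    _ = Fintype.card ι * b := by simp

lemma ae_eventually_lt_dist_decode {ι : ℕ → Type*} [∀ R, Fintype (ι R)] (E : (R : ℕ) → α → ι R)
    (D : (R : ℕ) → ι R → X) {r : ℕ → ℝ} {b : ℕ → ℝ≥0∞}
    (hb : ∀ᶠ R in atTop, ∀ x, μ (f ⁻¹' closedBall x (r R)) ≤ b R)
    (hsum : ∑' R, Fintype.card (ι R) * b R ≠ ∞) :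
    ∀ᵐ a ∂μ, ∀ᶠ R in atTop, r R < dist (f a) (D R (E R a)) := by
  have hmeasure := hb.mono fun R hR => measure_setOf_dist_decode_le (E R) (D R) hR
  simpa only [mem_ofPred_eq, not_le] using
    ae_eventually_notMem_of_eventually_measure_le hmeasure hsum

end Decoding

section GrowthOrder

variable [NormedAddCommGroup X] {S : Set X}

lemma HasGrowthOrder.ae_eventually_mul_rpow_neg_lt [MeasurableSpace X] {P : Measure S}
    {s₀ s K : ℝ} (hP : HasGrowthOrder S P s₀) (hs₀ : 0 ≤ s₀) (hs : s₀ < s) (hK : 0 < K)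
    (E : (R : ℕ) → S → (Fin R → Bool)) (D : (R : ℕ) → (Fin R → Bool) → X) :
    ∀ᵐ x : S ∂P, ∀ᶠ R : ℕ in atTop, K * (R : ℝ) ^ (-s) < ‖(x : X) - D R (E R x)‖ := by
  obtain ⟨t, hs₀t, hts⟩ := exists_between hs
  have ht : 0 < t := hs₀.trans_lt hs₀t
  obtain ⟨ε₀, c, hε₀, hc, hball⟩ := hP t hs₀t
  have hradius : Tendsto (fun R : ℕ => K * (R : ℝ) ^ (-s)) atTop (𝓝 0) := by
    simpa using ((tendsto_rpow_neg_atTop (ht.trans hts)).comp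
      tendsto_natCast_atTop_atTop).const_mul K
  have hsmall : ∀ᶠ R : ℕ in atTop, ∀ x : X,
      P ((↑) ⁻¹' closedBall x (K * (R : ℝ) ^ (-s))) ≤
        ENNReal.ofReal (2 ^ (-(c * (K * (R : ℝ) ^ (-s)) ^ (-1 / t)))) := by
    filter_upwards [eventually_gt_atTop 0, hradius.eventually_lt_const hε₀] with R hR hlt x
    exact hball x _ (by positivity) hlt
  have hsum : ∑' R : ℕ, Fintype.card (Fin R → Bool) *
      ENNReal.ofReal (2 ^ (-(c * (K * (R : ℝ) ^ (-s)) ^ (-1 / t)))) ≠ ∞ := by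
    simpa using tsum_two_pow_mul_ofReal_two_rpow_ne_top hc hK ht hts
  simpa only [dist_eq_norm] using ae_eventually_lt_dist_decode E D hsmall hsum

lemma notMem_approxClass_of_tendsto_atTop {E : (R : ℕ) → S → (Fin R → Bool)}
    {D : (R : ℕ) → (Fin R → Bool) → X} {s : ℝ} {x : S}
    (hx : Tendsto (fun R : ℕ => (R : ℝ) ^ s * ‖(x : X) - D R (E R x)‖) atTop atTop) :
    x ∉ approxClass S E D s := by
  rintro ⟨K, hK⟩
  obtain ⟨R, hlt, hR⟩ := ((hx.eventually_gt_atTop K).and (eventually_gt_atTop 0)).exists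
  exact (hK R hR).not_gt hlt

end GrowthOrder

theorem statement5_general {X : Type*} [NormedAddCommGroup X] [MeasurableSpace X]
    (S : Set X) (P : Measure S) (s₀ : ℝ) (hs₀ : 0 ≤ s₀) (hP : HasGrowthOrder S P s₀)
    (s : ℝ) (hs : s₀ < s)
    (E : (R : ℕ) → S → (Fin R → Bool)) (D : (R : ℕ) → (Fin R → Bool) → X) :
    ∀ᵐ x : S ∂P, Tendsto (fun R : ℕ => (R : ℝ) ^ s * ‖(x : X) - D R (E R x)‖) atTop atTop := by
  have hlarge : ∀ᵐ x : S ∂P, ∀ n : ℕ, ∀ᶠ R : ℕ in atTop,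
      ((n : ℝ) + 1) * (R : ℝ) ^ (-s) < ‖(x : X) - D R (E R x)‖ :=
    ae_all_iff.2 fun n => hP.ae_eventually_mul_rpow_neg_lt hs₀ hs n.cast_add_one_pos E D
  filter_upwards [hlarge] with x hx
  refine tendsto_atTop.2 fun b => ?_
  obtain ⟨n, hn⟩ := exists_nat_ge b
  filter_upwards [hx n, eventually_gt_atTop 0] with R hlt hR
  rw [Real.rpow_neg R.cast_nonneg, ← div_eq_mul_inv, div_lt_iff₀' (by positivity)] at hlt
  linarith

theorem statement5 {X : Type*} [NormedAddCommGroup X] [NormedSpace ℝ X] [CompleteSpace X]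
    [MeasurableSpace X] [BorelSpace X]
    (S : Set X) (P : Measure S) [IsProbabilityMeasure P]
    (s₀ : ℝ) (hs₀ : 0 ≤ s₀) (hP : HasGrowthOrder S P s₀)
    (s : ℝ) (hs : s₀ < s)
    (E : (R : ℕ) → S → (Fin R → Bool)) (D : (R : ℕ) → (Fin R → Bool) → X) :
    P (approxClass S E D s) = 0 :=
  measure_eq_zero_iff_ae_notMem.2 <|
    (statement5_general S P s₀ hs₀ hP s hs E D).mono fun _ => notMem_approxClass_of_tendsto_atTop
end
end

section
/- Let X, Y be real Banach spaces, S ⊆ X, S' ⊆ Y, and let Φ : S → Y be Lipschitz continuous (with respect to the X-norm on S and the Y-norm) with Φ(S) ⊇ S'. Then for every s ≥ 0: if there exist a codec (E_R, D_R)_{R∈ℕ} for S in X and K > 0 with δ(E_R, D_R) ≤ K·R^{−s} for all R ∈ ℕ, then there exist a codec (E'_R, D'_R)_{R∈ℕ} for S' in Y and K' > 0 with δ(E'_R, D'_R) ≤ K'·R^{−s} for all R ∈ ℕ. In particular s*(S', Y) ≥ s*(S, X). -/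
open MeasureTheory Metric Set ENNReal

noncomputable section

variable {X : Type*}

/-!
Two points of `S` with the same code lie within `2 * ε` of each other when the distortion is at most
`ε`, so their images under an `L`-Lipschitz map `Φ` lie within `2 * L * ε`. Hence a point `Φ x` can
be encoded by the code of `x`, and a code decoded to the image of any point of `S` that carries it.
The decoder of `S` may take values outside `S`, where `Φ` is undefined; this detour through `S`
costs the factor `2`.
-/

section Codes

variable {α C Y : Type*} [PseudoMetricSpace Y]

theorem dist_le_two_mul_of_encode_eq [PseudoMetricSpace X] {u : α → X} {E : α → C} {D : C → X}
    {ε : ℝ} (hε : ∀ a, dist (u a) (D (E a)) ≤ ε) {a b : α} (hab : E a = E b) :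
    dist (u a) (u b) ≤ 2 * ε :=
  calc dist (u a) (u b) ≤ dist (u a) (D (E a)) + dist (u b) (D (E a)) := dist_triangle_right _ _ _
    _ ≤ ε + ε := add_le_add (hε a) (hab ▸ hε b)
    _ = 2 * ε := (two_mul ε).symm

theorem dist_extend_apply_le {f : α → C} {g : α → Y} {δ : ℝ}
    (hfg : ∀ a b, f a = f b → dist (g a) (g b) ≤ δ) (e : C → Y) (a : α) :
    dist (g a) (Function.extend f g e (f a)) ≤ δ := by
  classical
  have ha : ∃ b, f b = f a := ⟨a, rfl⟩
  rw [Function.extend_def, dif_pos ha]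
  exact hfg a _ ha.choose_spec.symm

theorem dist_extend_encode_le_of_lipschitzWith [PseudoMetricSpace X] {S : Set X} {E : S → C}
    {D : C → X} {ε : ℝ} (hε : ∀ x : S, dist (x : X) (D (E x)) ≤ ε) {Φ : S → Y} {L : NNReal}
    (hΦ : LipschitzWith L Φ) (e : C → Y) (x : S) :
    dist (Φ x) (Function.extend E Φ e (E x)) ≤ L * (2 * ε) :=
  dist_extend_apply_le (f := E) (g := Φ)
    (fun _ _ hcode => hΦ.dist_le_mul_of_le (dist_le_two_mul_of_encode_eq hε hcode)) e x

end Codes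

section Compressibility

variable {Y : Type*} [NormedAddCommGroup X] [NormedAddCommGroup Y] {S : Set X} {s : ℝ}

theorem compressibleAt_iff_exists_pos :
    CompressibleAt S s ↔
      ∃ (E : (R : ℕ) → S → (Fin R → Bool)) (D : (R : ℕ) → (Fin R → Bool) → X) (K : ℝ),
        0 < K ∧ ∀ R : ℕ, 0 < R → ∀ x : S, ‖(x : X) - D R (E R x)‖ ≤ K * (R : ℝ) ^ (-s) := by
  have rate_mul_le_iff {R : ℕ} (hR : 0 < R) (δ K : ℝ) :
      (R : ℝ) ^ s * δ ≤ K ↔ δ ≤ K * (R : ℝ) ^ (-s) := by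
    rw [Real.rpow_neg R.cast_nonneg, ← div_eq_mul_inv, le_div_iff₀' (by positivity)]
  constructor
  · rintro ⟨E, D, K, hK⟩
    exact ⟨E, D, max K 1, by positivity, fun R hR x =>
      (rate_mul_le_iff hR _ _).1 ((hK R hR x).trans (le_max_left K 1))⟩
  · rintro ⟨E, D, K, -, hK⟩
    exact ⟨E, D, K, fun R hR x => (rate_mul_le_iff hR _ _).2 (hK R hR x)⟩

theorem CompressibleAt.mono_s8 {T : Set X} (hS : CompressibleAt S s) (hTS : T ⊆ S) :
    CompressibleAt T s := by
  obtain ⟨E, D, K, hK⟩ := hS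
  exact ⟨fun R => E R ∘ inclusion hTS, D, K, fun R hR x => hK R hR (inclusion hTS x)⟩

theorem CompressibleAt.range_of_lipschitzWith (hS : CompressibleAt S s) {Φ : S → Y} {L : NNReal}
    (hΦ : LipschitzWith L Φ) : CompressibleAt (range Φ) s := by
  obtain ⟨E, D, K, hK⟩ := hS
  refine ⟨fun R => E R ∘ rangeSplitting Φ, fun R => Function.extend (E R) Φ 0, L * (2 * K),
    fun R hR y => ?_⟩
  have hRs : 0 < (R : ℝ) ^ s := by positivity
  have hdist (x : S) : dist (x : X) (D R (E R x)) ≤ K / (R : ℝ) ^ s := by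
    rw [dist_eq_norm, le_div_iff₀' hRs]
    exact hK R hR x
  calc (R : ℝ) ^ s * ‖(y : Y) - Function.extend (E R) Φ 0 (E R (rangeSplitting Φ y))‖
      = (R : ℝ) ^ s * dist (Φ (rangeSplitting Φ y))
          (Function.extend (E R) Φ 0 (E R (rangeSplitting Φ y))) := by
        rw [apply_rangeSplitting Φ, dist_eq_norm]
    _ ≤ (R : ℝ) ^ s * (L * (2 * (K / (R : ℝ) ^ s))) := by
        gcongr
        exact dist_extend_encode_le_of_lipschitzWith hdist hΦ 0 _
    _ = L * (2 * K) := by field_simp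

theorem optRate_le_optRate {S' : Set Y}
    (h : ∀ s : ℝ, 0 ≤ s → CompressibleAt S s → CompressibleAt S' s) : optRate S ≤ optRate S' :=
  sSup_le_sSup (image_mono fun s hs => ⟨hs.1, h s hs.1 hs.2⟩)

end Compressibility

theorem statement8_general {X Y : Type*} [NormedAddCommGroup X] [NormedAddCommGroup Y]
    (S : Set X) (S' : Set Y) (Φ : S → Y) (L : NNReal) (hΦ : LipschitzWith L Φ)
    (hrange : S' ⊆ Set.range Φ) :
    (∀ s : ℝ,
      (∃ (E : (R : ℕ) → S → (Fin R → Bool)) (D : (R : ℕ) → (Fin R → Bool) → X) (K : ℝ),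
        0 < K ∧ ∀ R : ℕ, 0 < R → ∀ x : S, ‖(x : X) - D R (E R x)‖ ≤ K * (R : ℝ) ^ (-s)) →
      (∃ (E' : (R : ℕ) → S' → (Fin R → Bool)) (D' : (R : ℕ) → (Fin R → Bool) → Y) (K' : ℝ),
        0 < K' ∧ ∀ R : ℕ, 0 < R → ∀ y : S', ‖(y : Y) - D' R (E' R y)‖ ≤ K' * (R : ℝ) ^ (-s))) ∧
    optRate S ≤ optRate S' := by
  have transfer (s : ℝ) (hS : CompressibleAt S s) : CompressibleAt S' s :=
    (hS.range_of_lipschitzWith hΦ).mono_s8 hrange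
  refine ⟨fun s => ?_, optRate_le_optRate fun s _ => transfer s⟩
  rw [← compressibleAt_iff_exists_pos, ← compressibleAt_iff_exists_pos]
  exact transfer s

theorem statement8 {X Y : Type*}
    [NormedAddCommGroup X] [NormedSpace ℝ X] [CompleteSpace X]
    [NormedAddCommGroup Y] [NormedSpace ℝ Y] [CompleteSpace Y]
    (S : Set X) (S' : Set Y) (Φ : S → Y) (L : NNReal) (hΦ : LipschitzWith L Φ)
    (hrange : S' ⊆ Set.range Φ) :
    (∀ s : ℝ, 0 ≤ s →
      (∃ (E : (R : ℕ) → S → (Fin R → Bool)) (D : (R : ℕ) → (Fin R → Bool) → X) (K : ℝ),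
        0 < K ∧ ∀ R : ℕ, 0 < R → ∀ x : S, ‖(x : X) - D R (E R x)‖ ≤ K * (R : ℝ) ^ (-s)) →
      (∃ (E' : (R : ℕ) → S' → (Fin R → Bool)) (D' : (R : ℕ) → (Fin R → Bool) → Y) (K' : ℝ),
        0 < K' ∧ ∀ R : ℕ, 0 < R → ∀ y : S', ‖(y : Y) - D' R (E' R y)‖ ≤ K' * (R : ℝ) ^ (-s))) ∧
    optRate S ≤ optRate S' :=
  have ⟨hcodec, hrate⟩ := statement8_general S S' Φ L hΦ hrange
  ⟨fun s _ => hcodec s, hrate⟩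
end
end
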